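/- arXiv:math/0612331 — 2 statements merged into one kernel-verified Lean document; each statement's English description precedes it below -/
import Mathlib

section
/- If G ∈ F₄(F₂, P₄), then |V(G)| ≤ 8, where P₄ is the path on 4 vertices. -/
/-!
Over `ZMod 2` a matrix of a graph is determined by its diagonal. A matrix with graph `P₄` always
has rank at least `3`, since its first three rows restricted to the last three columns form a
unitriangular matrix, and it is singular for exactly five diagonals (`diagP4`). Fix an induced `P₄`
in `G`. If a matrix `A` of `G` has rank at most `3`, then its restriction to the path is one of the
five singular matrices, and the rows of the path span all rows. Hence the adjacency pattern
`x ∈ (ZMod 2)⁴` of every other vertex to the path lies in the column space of that `4 × 4` matrix,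
and the entry between two other vertices with patterns `x` and `y` is forced to be `formP4 d x y`
(`exists_unobstructed`). Conversely these conditions produce a matrix of rank at most `3`
(`minRank_le_of_unobstructed`). So `mr(G) ≥ 4` iff each of the five diagonals is obstructed, by one
vertex with a bad pattern or by a pair of vertices with the wrong adjacency.

The combinatorial core (`fourObstruct_of_forall`) is that whenever all five diagonals are
obstructed, some four vertices outside the path already obstruct all of them. The diagonals `0, 1`
have the same column space, and so have `3, 4`; the cases are distinguished by which column spaces
are left by some pattern. When single pairs are not economical enough, the pairs of vertices
attached to a suitable end of the path obstruct one of two diagonals each, and three vertices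
realising both possibilities are found by `exists_two_coloured_triple`.

If `G` had at least nine vertices, some vertex `v` would avoid both the path and the four
obstructing vertices. Then all diagonals are obstructed in `G - v` too, so `mr(G - v) ≥ 4`, a
contradiction.
-/

open Matrix

/-- `A` is a symmetric matrix over `F` whose off-diagonal nonzero pattern is
given by the graph `G` (diagonal entries are unconstrained). -/
def IsGraphMatrix (F : Type*) [Field F] {V : Type*} (G : SimpleGraph V)
    (A : Matrix V V F) : Prop :=
  A.IsSymm ∧ ∀ i j : V, i ≠ j → (A i j ≠ 0 ↔ G.Adj i j)

/-- The minimum rank `mr(F, G)` of the graph `G` over the field `F`. -/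
noncomputable def minRank (F : Type*) [Field F] {V : Type*} [Fintype V]
    (G : SimpleGraph V) : ℕ :=
  sInf {r : ℕ | ∃ A : Matrix V V F, IsGraphMatrix F G A ∧ A.rank = r}

/-- The graph `G - v` obtained from `G` by deleting the vertex `v`. -/
def deleteVert {V : Type*} (G : SimpleGraph V) (v : V) : SimpleGraph {u : V // u ≠ v} :=
  SimpleGraph.comap Subtype.val G

/-- `G ∈ F_K(F, H)`: `G` contains `H` as an induced subgraph, `mr(F, G) ≥ K`, and for
some induced copy of `H` in `G` (an embedding `f : H ↪g G`), `mr(F, G - v) ≤ K - 1`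
for every vertex `v` of `G` outside that copy. -/
def MemForbRel (F : Type*) [Field F] (K : ℕ) {VH VG : Type*} [Fintype VH] [Fintype VG]
    [DecidableEq VG] (H : SimpleGraph VH) (G : SimpleGraph VG) : Prop :=
  K ≤ minRank F G ∧
    ∃ f : H ↪g G, ∀ v : VG, v ∉ Set.range f → minRank F (deleteVert G v) + 1 ≤ K

/-- The path `P₄` on vertices `0, 1, 2, 3` with edges `01, 12, 23`. -/
def pathP4 : SimpleGraph (Fin 4) := SimpleGraph.fromEdgeSet {s(0,1), s(1,2), s(2,3)}

/-! ### Adjacency patterns and the five singular diagonals -/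

/-- The diagonals `d` (five of the sixteen) for which the matrix with graph `P₄` and diagonal `d`
is singular over `ZMod 2`. -/
def diagP4 : Fin 5 → Fin 4 → ZMod 2 :=
  ![![0, 0, 1, 1], ![0, 1, 1, 1], ![1, 0, 0, 1], ![1, 1, 0, 0], ![1, 1, 1, 0]]

/-- The symmetric matrix with graph `P₄` and diagonal `d`. -/
def matP4 (d : Fin 4 → ZMod 2) : Matrix (Fin 4) (Fin 4) (ZMod 2) :=
  !![d 0, 1, 0, 0; 1, d 1, 1, 0; 0, 1, d 2, 1; 0, 0, 1, d 3]

/-- The vector spanning the kernel of `matP4 (diagP4 d)`. A pattern `b` lies in the column space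
iff it is orthogonal to this vector. -/
def kerP4 : Fin 5 → Fin 4 → ZMod 2 :=
  ![![1, 0, 1, 1], ![1, 0, 1, 1], ![1, 1, 1, 1], ![1, 1, 0, 1], ![1, 1, 0, 1]]

/-- A solution `c` of `matP4 (diagP4 d) *ᵥ c = b`, valid when `b` is in the column space. -/
def solP4 (d : Fin 5) (b : Fin 4 → ZMod 2) : Fin 4 → ZMod 2 :=
  ![![b 1 + b 3, b 0, b 3, 0], ![b 0 + b 1 + b 3, b 0, b 3, 0], ![b 1 + b 3, b 2, b 3, 0],
    ![0, b 0, b 3, b 0 + b 2], ![0, b 0, b 3, b 0 + b 2 + b 3]] d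

/-- The bilinear form on the column space of `matP4 (diagP4 d)` inherited from that matrix; it is
the only possible entry between vertices with patterns `x` and `y` in a rank `3` matrix. -/
def formP4 (d : Fin 5) (x y : Fin 4 → ZMod 2) : ZMod 2 := solP4 d x ⬝ᵥ y

/-- The pair `x, y` (possibly `x = y`) obstructs the diagonal `d`: one of the patterns is outside
the column space, or the entry `a x y` differs from the forced one. -/
def Obstructs {E : Type*} (b : E → Fin 4 → ZMod 2) (a : E → E → ZMod 2) (d : Fin 5)
    (x y : E) : Prop :=
  kerP4 d ⬝ᵥ b x ≠ 0 ∨ kerP4 d ⬝ᵥ b y ≠ 0 ∨ (x ≠ y ∧ a x y ≠ formP4 d (b x) (b y))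

/-! ### Two-coloured triples -/

/-- If both colours occur on pairs from `T`, any vertex `t` can be completed by two vertices of `T`
to a triple carrying both colours. -/
lemma exists_two_coloured_triple {E : Type*} (T : E → Prop) (c : E → E → Prop)
    {t x y z w : E} (hx : T x) (hy : T y) (hz : T z) (hw : T w) (hxy : x ≠ y) (hzw : z ≠ w)
    (h1 : c x y) (h2 : ¬ c z w) :
    ∃ p q, T p ∧ T q ∧
      (∃ u ∈ ({t, p, q} : Set E), ∃ v ∈ ({t, p, q} : Set E), u ≠ v ∧ c u v) ∧
      (∃ u ∈ ({t, p, q} : Set E), ∃ v ∈ ({t, p, q} : Set E), u ≠ v ∧ ¬ c u v) := by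
  by_cases hex : ∃ p q, T p ∧ T q ∧ p ≠ t ∧ q ≠ t ∧ c t p ∧ ¬ c t q
  · obtain ⟨p, q, hp, hq, hpt, hqt, h3, h4⟩ := hex
    exact ⟨p, q, hp, hq, ⟨t, by simp, p, by simp, hpt.symm, h3⟩,
      ⟨t, by simp, q, by simp, hqt.symm, h4⟩⟩
  · by_cases hall : ∃ p, T p ∧ p ≠ t ∧ c t p
    · refine ⟨z, w, hz, hw, ?_, ⟨z, by simp, w, by simp, hzw, h2⟩⟩
      obtain ⟨p, hp, hpt, h3⟩ := hall
      by_cases hzt : z = t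
      · exact absurd ⟨p, w, hp, hw, hpt, fun h => hzw (hzt.trans h.symm), h3, hzt ▸ h2⟩ hex
      · exact ⟨t, by simp, z, by simp, fun h => hzt h.symm,
          by_contra fun h => hex ⟨p, z, hp, hz, hpt, hzt, h3, h⟩⟩
    · refine ⟨x, y, hx, hy, ⟨x, by simp, y, by simp, hxy, h1⟩, ?_⟩
      by_cases hxt : x = t
      · exact absurd ⟨y, hy, fun h => hxy (hxt.trans h.symm), hxt ▸ h1⟩ hall
      · exact ⟨t, by simp, x, by simp, fun h => hxt h.symm, fun h => hall ⟨x, hx, hxt, h⟩⟩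

/-! ### Relations between the forced forms

Finite checks over two adjacency patterns `x`, `y` and an adjacency value `a`. The name `viol_d`
refers to `a ≠ formP4 d x y`, the names `end`, `left_end`, `right_end` to adjacency with the ends
`0` and `3` of the path. -/

section Patterns

set_option synthInstance.maxSize 4000
set_option synthInstance.maxHeartbeats 4000000

variable (x y : Fin 4 → ZMod 2) (a : ZMod 2)

lemma viol_two_of_three_four (hx2 : kerP4 2 ⬝ᵥ x = 0) (hy2 : kerP4 2 ⬝ᵥ y = 0)
    (hx3 : kerP4 3 ⬝ᵥ x = 0) (hy3 : kerP4 3 ⬝ᵥ y = 0)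
    (h3 : a ≠ formP4 3 x y) (h4 : a ≠ formP4 4 x y) :
    a ≠ formP4 2 x y := by
  simp only [kerP4, formP4, solP4, dotProduct, Fin.sum_univ_four, Matrix.cons_val] at *
  generalize x 0 = x0, x 1 = x1, x 2 = x2, x 3 = x3, y 0 = y0, y 1 = y1, y 2 = y2, y 3 = y3 at *
  revert x0 x1 x2 x3 y0 y1 y2 y3 a
  decide

lemma end_of_viol_three (hx3 : kerP4 3 ⬝ᵥ x = 0) (hy3 : kerP4 3 ⬝ᵥ y = 0)
    (h3 : a ≠ formP4 3 x y) (h4 : ¬ a ≠ formP4 4 x y) :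
    x 3 = 1 ∧ y 3 = 1 := by
  simp only [kerP4, formP4, solP4, dotProduct, Fin.sum_univ_four, Matrix.cons_val] at *
  generalize x 0 = x0, x 1 = x1, x 2 = x2, x 3 = x3, y 0 = y0, y 1 = y1, y 2 = y2, y 3 = y3 at *
  revert x0 x1 x2 x3 y0 y1 y2 y3 a
  decide

lemma end_of_viol_four (hx3 : kerP4 3 ⬝ᵥ x = 0) (hy3 : kerP4 3 ⬝ᵥ y = 0)
    (h3 : ¬ a ≠ formP4 3 x y) (h4 : a ≠ formP4 4 x y) :
    x 3 = 1 ∧ y 3 = 1 := by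
  simp only [kerP4, formP4, solP4, dotProduct, Fin.sum_univ_four, Matrix.cons_val] at *
  generalize x 0 = x0, x 1 = x1, x 2 = x2, x 3 = x3, y 0 = y0, y 1 = y1, y 2 = y2, y 3 = y3 at *
  revert x0 x1 x2 x3 y0 y1 y2 y3 a
  decide

lemma viol_four_of_end (hx3 : kerP4 3 ⬝ᵥ x = 0) (hy3 : kerP4 3 ⬝ᵥ y = 0)
    (hx : x 3 = 1) (hy : y 3 = 1) (h3 : ¬ a ≠ formP4 3 x y) :
    a ≠ formP4 4 x y := by
  simp only [kerP4, formP4, solP4, dotProduct, Fin.sum_univ_four, Matrix.cons_val] at *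
  generalize x 0 = x0, x 1 = x1, x 2 = x2, x 3 = x3, y 0 = y0, y 1 = y1, y 2 = y2, y 3 = y3 at *
  revert x0 x1 x2 x3 y0 y1 y2 y3 a
  decide

lemma viol_two_of_end (hx2 : kerP4 2 ⬝ᵥ x = 0) (hy2 : kerP4 2 ⬝ᵥ y = 0)
    (hx3 : kerP4 3 ⬝ᵥ x = 0) (hy3 : kerP4 3 ⬝ᵥ y = 0)
    (hx : x 3 = 1) (hy : y 3 = 1) (h3 : a ≠ formP4 3 x y) :
    a ≠ formP4 2 x y := by
  simp only [kerP4, formP4, solP4, dotProduct, Fin.sum_univ_four, Matrix.cons_val] at *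
  generalize x 0 = x0, x 1 = x1, x 2 = x2, x 3 = x3, y 0 = y0, y 1 = y1, y 2 = y2, y 3 = y3 at *
  revert x0 x1 x2 x3 y0 y1 y2 y3 a
  decide

lemma viol_of_viol_zero (hx0 : kerP4 0 ⬝ᵥ x = 0) (hy0 : kerP4 0 ⬝ᵥ y = 0)
    (hx2 : kerP4 2 ⬝ᵥ x = 0) (hy2 : kerP4 2 ⬝ᵥ y = 0)
    (hx3 : kerP4 3 ⬝ᵥ x = 0) (hy3 : kerP4 3 ⬝ᵥ y = 0)
    (h0 : a ≠ formP4 0 x y) :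
    a ≠ formP4 2 x y ∧ a ≠ formP4 3 x y := by
  simp only [kerP4, formP4, solP4, dotProduct, Fin.sum_univ_four, Matrix.cons_val] at *
  generalize x 0 = x0, x 1 = x1, x 2 = x2, x 3 = x3, y 0 = y0, y 1 = y1, y 2 = y2, y 3 = y3 at *
  revert x0 x1 x2 x3 y0 y1 y2 y3 a
  decide

lemma viol_one_iff_four (hx0 : kerP4 0 ⬝ᵥ x = 0) (hy0 : kerP4 0 ⬝ᵥ y = 0)
    (hx3 : kerP4 3 ⬝ᵥ x = 0) (hy3 : kerP4 3 ⬝ᵥ y = 0) :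
    a ≠ formP4 1 x y ↔ a ≠ formP4 4 x y := by
  simp only [kerP4, formP4, solP4, dotProduct, Fin.sum_univ_four, Matrix.cons_val] at *
  generalize x 0 = x0, x 1 = x1, x 2 = x2, x 3 = x3, y 0 = y0, y 1 = y1, y 2 = y2, y 3 = y3 at *
  revert x0 x1 x2 x3 y0 y1 y2 y3 a
  decide

lemma split_zero_one (hx0 : kerP4 0 ⬝ᵥ x = 0) (hy0 : kerP4 0 ⬝ᵥ y = 0)
    (hx3 : kerP4 3 ⬝ᵥ x = 0) (hy3 : kerP4 3 ⬝ᵥ y = 0)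
    (h0 : a ≠ formP4 0 x y) (h1 : a ≠ formP4 1 x y) :
    kerP4 2 ⬝ᵥ x ≠ 0 ∨ kerP4 2 ⬝ᵥ y ≠ 0 ∨ a ≠ formP4 3 x y := by
  simp only [kerP4, formP4, solP4, dotProduct, Fin.sum_univ_four, Matrix.cons_val] at *
  generalize x 0 = x0, x 1 = x1, x 2 = x2, x 3 = x3, y 0 = y0, y 1 = y1, y 2 = y2, y 3 = y3 at *
  revert x0 x1 x2 x3 y0 y1 y2 y3 a
  decide

lemma split_one_three (hx0 : kerP4 0 ⬝ᵥ x = 0) (hy0 : kerP4 0 ⬝ᵥ y = 0)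
    (hx3 : kerP4 3 ⬝ᵥ x = 0) (hy3 : kerP4 3 ⬝ᵥ y = 0)
    (h1 : a ≠ formP4 1 x y) (h3 : a ≠ formP4 3 x y) :
    kerP4 2 ⬝ᵥ x ≠ 0 ∨ kerP4 2 ⬝ᵥ y ≠ 0 ∨ a ≠ formP4 0 x y := by
  simp only [kerP4, formP4, solP4, dotProduct, Fin.sum_univ_four, Matrix.cons_val] at *
  generalize x 0 = x0, x 1 = x1, x 2 = x2, x 3 = x3, y 0 = y0, y 1 = y1, y 2 = y2, y 3 = y3 at *
  revert x0 x1 x2 x3 y0 y1 y2 y3 a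
  decide

lemma ends_of_viol_one (hx0 : kerP4 0 ⬝ᵥ x = 0) (hy0 : kerP4 0 ⬝ᵥ y = 0)
    (hx3 : kerP4 3 ⬝ᵥ x = 0) (hy3 : kerP4 3 ⬝ᵥ y = 0)
    (h0 : ¬ a ≠ formP4 0 x y) (h1 : a ≠ formP4 1 x y) (h3 : ¬ a ≠ formP4 3 x y) :
    (x 0 = 1 ∧ x 3 = 1) ∧ (y 0 = 1 ∧ y 3 = 1) := by
  simp only [kerP4, formP4, solP4, dotProduct, Fin.sum_univ_four, Matrix.cons_val] at *
  generalize x 0 = x0, x 1 = x1, x 2 = x2, x 3 = x3, y 0 = y0, y 1 = y1, y 2 = y2, y 3 = y3 at *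
  revert x0 x1 x2 x3 y0 y1 y2 y3 a
  decide

lemma ends_of_not_viol_one (hx0 : kerP4 0 ⬝ᵥ x = 0) (hy0 : kerP4 0 ⬝ᵥ y = 0)
    (hx3 : kerP4 3 ⬝ᵥ x = 0) (hy3 : kerP4 3 ⬝ᵥ y = 0)
    (h0 : a ≠ formP4 0 x y) (h1 : ¬ a ≠ formP4 1 x y) (h3 : a ≠ formP4 3 x y) :
    (x 0 = 1 ∧ x 3 = 1) ∧ (y 0 = 1 ∧ y 3 = 1) := by
  simp only [kerP4, formP4, solP4, dotProduct, Fin.sum_univ_four, Matrix.cons_val] at *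
  generalize x 0 = x0, x 1 = x1, x 2 = x2, x 3 = x3, y 0 = y0, y 1 = y1, y 2 = y2, y 3 = y3 at *
  revert x0 x1 x2 x3 y0 y1 y2 y3 a
  decide

lemma viol_of_ends (hx0 : kerP4 0 ⬝ᵥ x = 0) (hy0 : kerP4 0 ⬝ᵥ y = 0)
    (hx3 : kerP4 3 ⬝ᵥ x = 0) (hy3 : kerP4 3 ⬝ᵥ y = 0)
    (hx : x 0 = 1 ∧ x 3 = 1) (hy : y 0 = 1 ∧ y 3 = 1) (h1 : ¬ a ≠ formP4 1 x y) :
    a ≠ formP4 0 x y ∧ a ≠ formP4 3 x y := by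
  simp only [kerP4, formP4, solP4, dotProduct, Fin.sum_univ_four, Matrix.cons_val] at *
  generalize x 0 = x0, x 1 = x1, x 2 = x2, x 3 = x3, y 0 = y0, y 1 = y1, y 2 = y2, y 3 = y3 at *
  revert x0 x1 x2 x3 y0 y1 y2 y3 a
  decide

lemma left_end_of_viol_zero (hx0 : kerP4 0 ⬝ᵥ x = 0) (hy0 : kerP4 0 ⬝ᵥ y = 0)
    (hx3 : kerP4 3 ⬝ᵥ x = 0) (hy3 : kerP4 3 ⬝ᵥ y = 0)
    (h0 : a ≠ formP4 0 x y) (h1 : ¬ a ≠ formP4 1 x y) (h3 : ¬ a ≠ formP4 3 x y) :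
    (x 0 = 1 ∧ x 3 = 0) ∨ (y 0 = 1 ∧ y 3 = 0) := by
  simp only [kerP4, formP4, solP4, dotProduct, Fin.sum_univ_four, Matrix.cons_val] at *
  generalize x 0 = x0, x 1 = x1, x 2 = x2, x 3 = x3, y 0 = y0, y 1 = y1, y 2 = y2, y 3 = y3 at *
  revert x0 x1 x2 x3 y0 y1 y2 y3 a
  decide

lemma right_end_of_viol_three (hx0 : kerP4 0 ⬝ᵥ x = 0) (hy0 : kerP4 0 ⬝ᵥ y = 0)
    (hx3 : kerP4 3 ⬝ᵥ x = 0) (hy3 : kerP4 3 ⬝ᵥ y = 0)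
    (h0 : ¬ a ≠ formP4 0 x y) (h1 : ¬ a ≠ formP4 1 x y) (h3 : a ≠ formP4 3 x y) :
    (x 0 = 0 ∧ x 3 = 1) ∨ (y 0 = 0 ∧ y 3 = 1) := by
  simp only [kerP4, formP4, solP4, dotProduct, Fin.sum_univ_four, Matrix.cons_val] at *
  generalize x 0 = x0, x 1 = x1, x 2 = x2, x 3 = x3, y 0 = y0, y 1 = y1, y 2 = y2, y 3 = y3 at *
  revert x0 x1 x2 x3 y0 y1 y2 y3 a
  decide

lemma viol_zero_of_left_end (hx0 : kerP4 0 ⬝ᵥ x = 0) (hy0 : kerP4 0 ⬝ᵥ y = 0)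
    (hx3 : kerP4 3 ⬝ᵥ x = 0) (hy3 : kerP4 3 ⬝ᵥ y = 0)
    (hx : x 0 = 1 ∧ x 3 = 1) (hy : y 0 = 1 ∧ y 3 = 0)
    (h : ¬ (a ≠ formP4 1 x y ∧ a ≠ formP4 3 x y)) :
    a ≠ formP4 0 x y ∧ kerP4 2 ⬝ᵥ y ≠ 0 := by
  simp only [kerP4, formP4, solP4, dotProduct, Fin.sum_univ_four, Matrix.cons_val] at *
  generalize x 0 = x0, x 1 = x1, x 2 = x2, x 3 = x3, y 0 = y0, y 1 = y1, y 2 = y2, y 3 = y3 at *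
  revert x0 x1 x2 x3 y0 y1 y2 y3 a
  decide

lemma viol_three_of_right_end (hx0 : kerP4 0 ⬝ᵥ x = 0) (hy0 : kerP4 0 ⬝ᵥ y = 0)
    (hx3 : kerP4 3 ⬝ᵥ x = 0) (hy3 : kerP4 3 ⬝ᵥ y = 0)
    (hx : x 0 = 1 ∧ x 3 = 1) (hy : y 0 = 0 ∧ y 3 = 1)
    (h : ¬ (a ≠ formP4 0 x y ∧ a ≠ formP4 1 x y)) :
    a ≠ formP4 3 x y := by
  simp only [kerP4, formP4, solP4, dotProduct, Fin.sum_univ_four, Matrix.cons_val] at *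
  generalize x 0 = x0, x 1 = x1, x 2 = x2, x 3 = x3, y 0 = y0, y 1 = y1, y 2 = y2, y 3 = y3 at *
  revert x0 x1 x2 x3 y0 y1 y2 y3 a
  decide

end Patterns

/-! ### Choosing four obstructing vertices -/

section Cover

variable {E : Type*} (b : E → Fin 4 → ZMod 2) (a : E → E → ZMod 2)

/-- Four vertices (repetitions allowed) suffice to obstruct all five diagonals. -/
def FourObstruct : Prop :=
  ∃ p q r s : E, ∀ d, ∃ x ∈ ({p, q, r, s} : Set E), ∃ y ∈ ({p, q, r, s} : Set E),
    Obstructs b a d x y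

variable {b a}

lemma FourObstruct.mk' {S : Set E} (p q r s : E) (hS : S = {p, q, r, s})
    (h0 : ∃ x ∈ S, ∃ y ∈ S, Obstructs b a 0 x y) (h1 : ∃ x ∈ S, ∃ y ∈ S, Obstructs b a 1 x y)
    (h2 : ∃ x ∈ S, ∃ y ∈ S, Obstructs b a 2 x y) (h3 : ∃ x ∈ S, ∃ y ∈ S, Obstructs b a 3 x y)
    (h4 : ∃ x ∈ S, ∃ y ∈ S, Obstructs b a 4 x y) : FourObstruct b a := by
  subst hS
  refine ⟨p, q, r, s, fun d => ?_⟩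
  fin_cases d
  exacts [h0, h1, h2, h3, h4]

lemma obstructs_self {d : Fin 5} {x : E} (h : kerP4 d ⬝ᵥ b x ≠ 0) : Obstructs b a d x x := Or.inl h

lemma obstructs_of_ne {d : Fin 5} {x y : E} (hxy : x ≠ y) (h : a x y ≠ formP4 d (b x) (b y)) :
    Obstructs b a d x y := Or.inr (Or.inr ⟨hxy, h⟩)

lemma Obstructs.of_ker {d : Fin 5} (hd : ∀ x, kerP4 d ⬝ᵥ b x = 0) {x y : E}
    (h : Obstructs b a d x y) : x ≠ y ∧ a x y ≠ formP4 d (b x) (b y) := by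
  simpa [Obstructs, hd] using h

/-- Some pattern leaves the column space of the diagonals `0, 1`, none that of `3, 4`. Unless
a single pair obstructs both `3` and `4`, each pair of vertices adjacent to the end `3` of the path
obstructs exactly one of them, so a two-coloured triple of such vertices obstructs both. -/
lemma fourObstruct_of_left (h : ∀ d, ∃ x y, Obstructs b a d x y) {x : E}
    (hx : kerP4 0 ⬝ᵥ b x ≠ 0) (hC : ∀ x, kerP4 3 ⬝ᵥ b x = 0) : FourObstruct b a := by
  have hx1 : kerP4 1 ⬝ᵥ b x ≠ 0 := hx
  have hC4 : ∀ x, kerP4 4 ⬝ᵥ b x = 0 := hC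
  by_cases hboth : ∃ p q, p ≠ q ∧ a p q ≠ formP4 3 (b p) (b q) ∧ a p q ≠ formP4 4 (b p) (b q)
  · obtain ⟨p, q, hpq, h3, h4⟩ := hboth
    by_cases hB : ∃ y, kerP4 2 ⬝ᵥ b y ≠ 0
    · obtain ⟨y, hy⟩ := hB
      exact .mk' x y p q rfl ⟨x, by simp, x, by simp, obstructs_self hx⟩
        ⟨x, by simp, x, by simp, obstructs_self hx1⟩ ⟨y, by simp, y, by simp, obstructs_self hy⟩
        ⟨p, by simp, q, by simp, obstructs_of_ne hpq h3⟩
        ⟨p, by simp, q, by simp, obstructs_of_ne hpq h4⟩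
    · push Not at hB
      exact .mk' x p q q rfl ⟨x, by simp, x, by simp, obstructs_self hx⟩
        ⟨x, by simp, x, by simp, obstructs_self hx1⟩
        ⟨p, by simp, q, by simp, obstructs_of_ne hpq
          (viol_two_of_three_four _ _ _ (hB p) (hB q) (hC p) (hC q) h3 h4)⟩
        ⟨p, by simp, q, by simp, obstructs_of_ne hpq h3⟩
        ⟨p, by simp, q, by simp, obstructs_of_ne hpq h4⟩
  · obtain ⟨z, w, hzw⟩ := h 3
    obtain ⟨hzw, h3⟩ := hzw.of_ker hC
    obtain ⟨u, v, huv⟩ := h 4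
    obtain ⟨huv, h4⟩ := huv.of_ker hC4
    have hT3 := end_of_viol_three _ _ _ (hC z) (hC w) h3 fun h => hboth ⟨z, w, hzw, h3, h⟩
    have hT4 := end_of_viol_four _ _ _ (hC u) (hC v) (fun h => hboth ⟨u, v, huv, h, h4⟩) h4
    have key := fun t => exists_two_coloured_triple (t := t) (fun x => b x 3 = 1)
      (fun x y => a x y ≠ formP4 3 (b x) (b y)) hT3.1 hT3.2 hT4.1 hT4.2 hzw huv h3
      fun h => hboth ⟨u, v, huv, h, h4⟩
    by_cases hB : ∃ t, b t 3 = 1 ∧ kerP4 2 ⬝ᵥ b t ≠ 0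
    · obtain ⟨t, ht, hB⟩ := hB
      obtain ⟨p, q, hp, hq, ⟨e, he, f, hf, hef, h5⟩, ⟨i, hi, j, hj, hij, h6⟩⟩ := key t
      have hi1 : b i 3 = 1 := by rcases hi with rfl | rfl | rfl <;> assumption
      have hj1 : b j 3 = 1 := by rcases hj with rfl | rfl | rfl <;> assumption
      exact .mk' x t p q rfl ⟨x, by simp, x, by simp, obstructs_self hx⟩
        ⟨x, by simp, x, by simp, obstructs_self hx1⟩ ⟨t, by simp, t, by simp, obstructs_self hB⟩
        ⟨e, Or.inr he, f, Or.inr hf, obstructs_of_ne hef h5⟩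
        ⟨i, Or.inr hi, j, Or.inr hj,
          obstructs_of_ne hij (viol_four_of_end _ _ _ (hC i) (hC j) hi1 hj1 h6)⟩
    · push Not at hB
      have ht := hT3.1
      obtain ⟨p, q, hp, hq, ⟨e, he, f, hf, hef, h5⟩, ⟨i, hi, j, hj, hij, h6⟩⟩ := key z
      have hi1 : b i 3 = 1 := by rcases hi with rfl | rfl | rfl <;> assumption
      have hj1 : b j 3 = 1 := by rcases hj with rfl | rfl | rfl <;> assumption
      have he1 : b e 3 = 1 := by rcases he with rfl | rfl | rfl <;> assumption
      have hf1 : b f 3 = 1 := by rcases hf with rfl | rfl | rfl <;> assumption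
      exact .mk' x z p q rfl ⟨x, by simp, x, by simp, obstructs_self hx⟩
        ⟨x, by simp, x, by simp, obstructs_self hx1⟩
        ⟨e, Or.inr he, f, Or.inr hf, obstructs_of_ne hef
          (viol_two_of_end _ _ _ (hB e he1) (hB f hf1) (hC e) (hC f) he1 hf1 h5)⟩
        ⟨e, Or.inr he, f, Or.inr hf, obstructs_of_ne hef h5⟩
        ⟨i, Or.inr hi, j, Or.inr hj,
          obstructs_of_ne hij (viol_four_of_end _ _ _ (hC i) (hC j) hi1 hj1 h6)⟩

/-- No pattern leaves the column space of any of the diagonals `0, 1, 3, 4`. Then `1` and `4` are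
always obstructed by the same pairs. -/
lemma fourObstruct_of_middle (h : ∀ d, ∃ x y, Obstructs b a d x y)
    (hA : ∀ x, kerP4 0 ⬝ᵥ b x = 0) (hC : ∀ x, kerP4 3 ⬝ᵥ b x = 0) : FourObstruct b a := by
  have hA1 : ∀ x, kerP4 1 ⬝ᵥ b x = 0 := hA
  obtain ⟨x0, y0, hxy0⟩ := h 0
  obtain ⟨hxy0, h0⟩ := hxy0.of_ker hA
  obtain ⟨r, r', hr⟩ := h 1
  obtain ⟨hr, h1⟩ := hr.of_ker hA1
  obtain ⟨x3, y3, hxy3⟩ := h 3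
  obtain ⟨hxy3, h3⟩ := hxy3.of_ker hC
  have h14 := fun x y => viol_one_iff_four _ _ (a x y) (hA x) (hA y) (hC x) (hC y)
  by_cases hB : ∃ y, kerP4 2 ⬝ᵥ b y ≠ 0
  swap
  · push Not at hB
    have h23 := viol_of_viol_zero _ _ _ (hA x0) (hA y0) (hB x0) (hB y0) (hC x0) (hC y0) h0
    exact .mk' x0 y0 r r' rfl ⟨x0, by simp, y0, by simp, obstructs_of_ne hxy0 h0⟩
      ⟨r, by simp, r', by simp, obstructs_of_ne hr h1⟩
      ⟨x0, by simp, y0, by simp, obstructs_of_ne hxy0 h23.1⟩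
      ⟨x0, by simp, y0, by simp, obstructs_of_ne hxy0 h23.2⟩
      ⟨r, by simp, r', by simp, obstructs_of_ne hr ((h14 _ _).1 h1)⟩
  obtain ⟨y, hy⟩ := hB
  by_cases h01 : ∃ p q, p ≠ q ∧ a p q ≠ formP4 0 (b p) (b q) ∧ a p q ≠ formP4 1 (b p) (b q)
  · obtain ⟨p, q, hpq, h0, h1⟩ := h01
    have h4 := (h14 _ _).1 h1
    by_cases h2 : kerP4 2 ⬝ᵥ b p ≠ 0 ∨ kerP4 2 ⬝ᵥ b q ≠ 0
    · exact .mk' p q x3 y3 rfl ⟨p, by simp, q, by simp, obstructs_of_ne hpq h0⟩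
        ⟨p, by simp, q, by simp, obstructs_of_ne hpq h1⟩
        ⟨p, by simp, q, by simp, h2.elim Or.inl (Or.inr ∘ Or.inl)⟩
        ⟨x3, by simp, y3, by simp, obstructs_of_ne hxy3 h3⟩
        ⟨p, by simp, q, by simp, obstructs_of_ne hpq h4⟩
    · have h3 : a p q ≠ formP4 3 (b p) (b q) := by
        have := split_zero_one _ _ _ (hA p) (hA q) (hC p) (hC q) h0 h1
        tauto
      exact .mk' p q y y rfl ⟨p, by simp, q, by simp, obstructs_of_ne hpq h0⟩
        ⟨p, by simp, q, by simp, obstructs_of_ne hpq h1⟩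
        ⟨y, by simp, y, by simp, obstructs_self hy⟩
        ⟨p, by simp, q, by simp, obstructs_of_ne hpq h3⟩
        ⟨p, by simp, q, by simp, obstructs_of_ne hpq h4⟩
  by_cases h13 : ∃ p q, p ≠ q ∧ a p q ≠ formP4 1 (b p) (b q) ∧ a p q ≠ formP4 3 (b p) (b q)
  · obtain ⟨p, q, hpq, h1, h3⟩ := h13
    have h4 := (h14 _ _).1 h1
    by_cases h2 : kerP4 2 ⬝ᵥ b p ≠ 0 ∨ kerP4 2 ⬝ᵥ b q ≠ 0
    · exact .mk' p q x0 y0 rfl ⟨x0, by simp, y0, by simp, obstructs_of_ne hxy0 h0⟩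
        ⟨p, by simp, q, by simp, obstructs_of_ne hpq h1⟩
        ⟨p, by simp, q, by simp, h2.elim Or.inl (Or.inr ∘ Or.inl)⟩
        ⟨p, by simp, q, by simp, obstructs_of_ne hpq h3⟩
        ⟨p, by simp, q, by simp, obstructs_of_ne hpq h4⟩
    · have h0 : a p q ≠ formP4 0 (b p) (b q) := by
        have := split_one_three _ _ _ (hA p) (hA q) (hC p) (hC q) h1 h3
        tauto
      exact absurd ⟨p, q, hpq, h0, h1⟩ h01
  -- The only pairs left that obstruct `1` join two vertices adjacent to exactly the path's ends.
  have hR := ends_of_viol_one _ _ _ (hA r) (hA r') (hC r) (hC r')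
    (fun h => h01 ⟨r, r', hr, h, h1⟩) h1 (fun h => h13 ⟨r, r', hr, h1, h⟩)
  by_cases h03 : ∃ p q, p ≠ q ∧ a p q ≠ formP4 0 (b p) (b q) ∧ a p q ≠ formP4 3 (b p) (b q)
  · obtain ⟨u, v, huv, h0, h3⟩ := h03
    have h1' : ¬ a u v ≠ formP4 1 (b u) (b v) := fun h => h01 ⟨u, v, huv, h0, h⟩
    have hR' := ends_of_not_viol_one _ _ _ (hA u) (hA v) (hC u) (hC v) h0 h1' h3
    obtain ⟨p, q, hp, hq, ⟨e, he, f, hf, hef, h5⟩, ⟨i, hi, j, hj, hij, h6⟩⟩ :=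
      exists_two_coloured_triple (t := r) (fun x => b x 0 = 1 ∧ b x 3 = 1)
        (fun x y => a x y ≠ formP4 1 (b x) (b y)) hR.1 hR.2 hR'.1 hR'.2 hr huv h1 h1'
    have hr1 := hR.1
    have hi1 : b i 0 = 1 ∧ b i 3 = 1 := by rcases hi with rfl | rfl | rfl <;> assumption
    have hj1 : b j 0 = 1 ∧ b j 3 = 1 := by rcases hj with rfl | rfl | rfl <;> assumption
    have h03 := viol_of_ends _ _ _ (hA i) (hA j) (hC i) (hC j) hi1 hj1 h6
    exact .mk' y r p q rfl ⟨i, Or.inr hi, j, Or.inr hj, obstructs_of_ne hij h03.1⟩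
      ⟨e, Or.inr he, f, Or.inr hf, obstructs_of_ne hef h5⟩
      ⟨y, by simp, y, by simp, obstructs_self hy⟩
      ⟨i, Or.inr hi, j, Or.inr hj, obstructs_of_ne hij h03.2⟩
      ⟨e, Or.inr he, f, Or.inr hf, obstructs_of_ne hef ((h14 _ _).1 h5)⟩
  · obtain ⟨q, hq⟩ : ∃ q, b q 0 = 1 ∧ b q 3 = 0 :=
      (left_end_of_viol_zero _ _ _ (hA x0) (hA y0) (hC x0) (hC y0) h0
        (fun h => h01 ⟨_, _, hxy0, h0, h⟩) (fun h => h03 ⟨_, _, hxy0, h0, h⟩)).elim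
        (fun h => ⟨_, h⟩) (fun h => ⟨_, h⟩)
    obtain ⟨p, hp⟩ : ∃ p, b p 0 = 0 ∧ b p 3 = 1 :=
      (right_end_of_viol_three _ _ _ (hA x3) (hA y3) (hC x3) (hC y3)
        (fun h => h03 ⟨_, _, hxy3, h, h3⟩) (fun h => h13 ⟨_, _, hxy3, h, h3⟩) h3).elim
        (fun h => ⟨_, h⟩) (fun h => ⟨_, h⟩)
    have hrq : r ≠ q := by
      rintro rfl
      exact one_ne_zero (hR.1.2.symm.trans hq.2)
    have hrp : r ≠ p := by
      rintro rfl
      exact one_ne_zero (hR.1.1.symm.trans hp.1)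
    have h0 := viol_zero_of_left_end _ _ (a r q) (hA r) (hA q) (hC r) (hC q) hR.1 hq
      (fun h => h13 ⟨r, q, hrq, h⟩)
    have h3 := viol_three_of_right_end _ _ (a r p) (hA r) (hA p) (hC r) (hC p) hR.1 hp
      (fun h => h01 ⟨r, p, hrp, h⟩)
    exact .mk' r r' p q rfl ⟨r, by simp, q, by simp, obstructs_of_ne hrq h0.1⟩
      ⟨r, by simp, r', by simp, obstructs_of_ne hr h1⟩
      ⟨q, by simp, q, by simp, obstructs_self h0.2⟩
      ⟨r, by simp, p, by simp, obstructs_of_ne hrp h3⟩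
      ⟨r, by simp, r', by simp, obstructs_of_ne hr ((h14 _ _).1 h1)⟩

/-- The permutation of the five diagonals induced by reversing the path. -/
def revDiag : Fin 5 → Fin 5 := ![3, 4, 2, 0, 1]

lemma kerP4_rev (d : Fin 5) (x : Fin 4 → ZMod 2) :
    kerP4 (revDiag d) ⬝ᵥ (x ∘ Fin.rev) = kerP4 d ⬝ᵥ x := by
  fin_cases d <;> simp [revDiag, kerP4, dotProduct, Fin.sum_univ_four, Fin.rev] <;> ring

lemma formP4_rev (d : Fin 5) (x y : Fin 4 → ZMod 2) (hx : kerP4 d ⬝ᵥ x = 0)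
    (hy : kerP4 d ⬝ᵥ y = 0) :
    formP4 (revDiag d) (x ∘ Fin.rev) (y ∘ Fin.rev) = formP4 d x y := by
  have h0 : Fin.rev (0 : Fin 4) = 3 := rfl
  have h1 : Fin.rev (1 : Fin 4) = 2 := rfl
  have h2 : Fin.rev (2 : Fin 4) = 1 := rfl
  have h3 : Fin.rev (3 : Fin 4) = 0 := rfl
  simp only [kerP4, formP4, solP4, dotProduct, Fin.sum_univ_four, Function.comp, h0, h1, h2, h3]
    at *
  generalize x 0 = x0, x 1 = x1, x 2 = x2, x 3 = x3, y 0 = y0, y 1 = y1, y 2 = y2, y 3 = y3 at *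
  revert x0 x1 x2 x3 y0 y1 y2 y3 d
  decide

lemma obstructs_rev {d : Fin 5} {x y : E} :
    Obstructs (fun x => b x ∘ Fin.rev) a (revDiag d) x y ↔ Obstructs b a d x y := by
  simp only [Obstructs, kerP4_rev]
  by_cases hx : kerP4 d ⬝ᵥ b x = 0 <;> by_cases hy : kerP4 d ⬝ᵥ b y = 0 <;>
    simp [hx, hy, formP4_rev]

/-- The diagonals `0, 1` share their column space, as do `3, 4`, and reversing the path exchanges
the two groups; so only `fourObstruct_of_left` and `fourObstruct_of_middle` need an argument. -/
lemma fourObstruct_of_forall (h : ∀ d, ∃ x y, Obstructs b a d x y) : FourObstruct b a := by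
  by_cases hA : ∃ x, kerP4 0 ⬝ᵥ b x ≠ 0 <;> by_cases hC : ∃ x, kerP4 3 ⬝ᵥ b x ≠ 0
  · obtain ⟨x, hx⟩ := hA
    obtain ⟨z, hz⟩ := hC
    obtain ⟨p, q, hpq⟩ := h 2
    exact .mk' x z p q rfl ⟨x, by simp, x, by simp, obstructs_self hx⟩
      ⟨x, by simp, x, by simp, obstructs_self (d := 1) hx⟩ ⟨p, by simp, q, by simp, hpq⟩
      ⟨z, by simp, z, by simp, obstructs_self hz⟩
      ⟨z, by simp, z, by simp, obstructs_self (d := 4) hz⟩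
  · push Not at hC
    exact fourObstruct_of_left h hA.choose_spec hC
  · push Not at hA
    obtain ⟨z, hz⟩ := hC
    have hrev : ∀ d, revDiag (revDiag d) = d := by decide
    obtain ⟨p, q, r, s, hS⟩ := fourObstruct_of_left (b := fun x => b x ∘ Fin.rev) (a := a) (x := z)
      (fun d => by
        obtain ⟨x, y, hxy⟩ := h (revDiag d)
        exact ⟨x, y, by rwa [← hrev d, obstructs_rev]⟩)
      ((kerP4_rev 3 (b z)).symm ▸ hz) (fun x => (kerP4_rev 0 (b x)).trans (hA x))
    refine ⟨p, q, r, s, fun d => ?_⟩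
    obtain ⟨x, hx, y, hy, hxy⟩ := hS (revDiag d)
    exact ⟨x, hx, y, hy, obstructs_rev.1 hxy⟩
  · push Not at hA hC
    exact fourObstruct_of_middle h hA hC

end Cover

/-! ### Rank at most three and obstructions -/

section Rank

open Classical in
/-- The `0`/`1` adjacency value of two vertices. -/
noncomputable def adjVal {W : Type*} (H : SimpleGraph W) (x y : W) : ZMod 2 :=
  if H.Adj x y then 1 else 0

lemma adjVal_ne_zero {W : Type*} (H : SimpleGraph W) (x y : W) :
    adjVal H x y ≠ 0 ↔ H.Adj x y := by
  unfold adjVal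
  split_ifs <;> simp_all

lemma adjVal_comm {W : Type*} (H : SimpleGraph W) (x y : W) : adjVal H x y = adjVal H y x := by
  classical
  exact if_congr (H.adj_comm x y) rfl rfl

/-- Over `ZMod 2` the off-diagonal entries of a matrix of `H` are determined by `H`. -/
lemma IsGraphMatrix.apply_eq {W : Type*} {H : SimpleGraph W} {A : Matrix W W (ZMod 2)}
    (hA : IsGraphMatrix (ZMod 2) H A) {x y : W} (hxy : x ≠ y) : A x y = adjVal H x y := by
  have h1 := (hA.2 x y hxy).trans (adjVal_ne_zero H x y).symm
  generalize A x y = s at *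
  generalize adjVal H x y = t at *
  revert s t
  decide

lemma matP4_ne_zero_iff (d : Fin 4 → ZMod 2) (i j : Fin 4) (hij : i ≠ j) :
    matP4 d i j ≠ 0 ↔ pathP4.Adj i j := by
  fin_cases i <;> fin_cases j <;> simp_all [matP4, pathP4]

lemma matP4_isSymm (d : Fin 4 → ZMod 2) : (matP4 d).IsSymm := by
  ext i j
  fin_cases i <;> fin_cases j <;> simp [matP4]

lemma adjVal_pathP4 {W : Type*} {H : SimpleGraph W} (f : pathP4 ↪g H) (d : Fin 4 → ZMod 2)
    {i j : Fin 4} (hij : i ≠ j) : adjVal H (f i) (f j) = matP4 d i j := by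
  have h1 := (adjVal_ne_zero H (f i) (f j)).trans
    (f.map_adj_iff.trans (matP4_ne_zero_iff d i j hij).symm)
  generalize matP4 d i j = s at *
  generalize adjVal H (f i) (f j) = t at *
  revert s t
  decide

lemma matP4_mulVec_solP4 (d : Fin 5) (x : Fin 4 → ZMod 2) (hx : kerP4 d ⬝ᵥ x = 0) :
    matP4 (diagP4 d) *ᵥ solP4 d x = x := by
  suffices h : (matP4 (diagP4 d) *ᵥ solP4 d x) 0 = x 0 ∧ (matP4 (diagP4 d) *ᵥ solP4 d x) 1 = x 1 ∧
      (matP4 (diagP4 d) *ᵥ solP4 d x) 2 = x 2 ∧ (matP4 (diagP4 d) *ᵥ solP4 d x) 3 = x 3 by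
    obtain ⟨h0, h1, h2, h3⟩ := h
    funext i
    fin_cases i <;> assumption
  simp only [kerP4, solP4, matP4, diagP4, dotProduct, mulVec, Fin.sum_univ_four] at *
  generalize x 0 = x0, x 1 = x1, x 2 = x2, x 3 = x3 at *
  revert x0 x1 x2 x3 d
  decide

lemma rank_matP4_le (d : Fin 5) : (matP4 (diagP4 d)).rank ≤ 3 := by
  have hker : ∀ d, matP4 (diagP4 d) *ᵥ kerP4 d = 0 := by decide
  have hne : ∀ d, kerP4 d ≠ 0 := by decide
  have hpos : 0 < Module.finrank (ZMod 2) (LinearMap.ker (matP4 (diagP4 d)).mulVecLin) := by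
    rw [Module.finrank_pos_iff]
    exact ⟨⟨kerP4 d, hker d⟩, 0, fun h => hne d (congrArg Subtype.val h)⟩
  have hsum := LinearMap.finrank_range_add_finrank_ker (matP4 (diagP4 d)).mulVecLin
  rw [Module.finrank_fin_fun] at hsum
  unfold Matrix.rank
  omega

/-- An unobstructed diagonal extends to a matrix of rank at most `3`: all entries are read off
from the form of the singular matrix on the path. -/
lemma minRank_le_of_unobstructed {W : Type*} [Fintype W] (H : SimpleGraph W) (f : pathP4 ↪g H)
    (d : Fin 5)
    (h : ∀ x y : {x // x ∉ Set.range f}, ¬ Obstructs (fun x i => adjVal H x.1 (f i))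
      (fun x y => adjVal H x.1 y.1) d x y) : minRank (ZMod 2) H ≤ 3 := by
  classical
  set P := matP4 (diagP4 d) with hP
  let c : W → Fin 4 → ZMod 2 := fun u =>
    if h : ∃ i, f i = u then Pi.single h.choose 1 else solP4 d fun i => adjVal H u (f i)
  have hcf : ∀ i, c (f i) = Pi.single i 1 := by
    intro i
    have hex : ∃ j, f j = f i := ⟨i, rfl⟩
    simp only [c, dif_pos hex]
    rw [f.injective hex.choose_spec]
  have hcx : ∀ u, u ∉ Set.range f → c u = solP4 d fun i => adjVal H u (f i) :=
    fun u hu => dif_neg hu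
  have hPx : ∀ u, u ∉ Set.range f → P *ᵥ c u = fun i => adjVal H u (f i) := by
    intro u hu
    rw [hcx u hu]
    refine matP4_mulVec_solP4 d _ (by_contra fun hk => h ⟨u, hu⟩ ⟨u, hu⟩ (Or.inl hk))
  have hPsymm : ∀ u v : Fin 4 → ZMod 2, u ⬝ᵥ P *ᵥ v = v ⬝ᵥ P *ᵥ u := by
    intro u v
    rw [Matrix.dotProduct_mulVec, dotProduct_comm, ← Matrix.mulVec_transpose,
      (matP4_isSymm (diagP4 d)).eq]
  let M : Matrix W W (ZMod 2) := (Matrix.of c) * P * (Matrix.of c)ᵀ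
  have hM : ∀ u v, M u v = c u ⬝ᵥ P *ᵥ c v := by
    intro u v
    simp only [M, Matrix.mul_assoc]
    rfl
  have hfx : ∀ i u, u ∉ Set.range f → c (f i) ⬝ᵥ P *ᵥ c u = adjVal H (f i) u := by
    intro i u hu
    rw [hPx u hu, hcf, single_one_dotProduct, adjVal_comm]
  have hMG : IsGraphMatrix (ZMod 2) H M := by
    refine ⟨Matrix.IsSymm.ext fun u v => by rw [hM, hM, hPsymm], fun u v huv => ?_⟩
    rw [← adjVal_ne_zero, hM]
    suffices hs : c u ⬝ᵥ P *ᵥ c v = adjVal H u v by rw [hs]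
    by_cases hu : u ∈ Set.range f <;> by_cases hv : v ∈ Set.range f
    · obtain ⟨i, rfl⟩ := hu
      obtain ⟨j, rfl⟩ := hv
      rw [hcf, hcf, adjVal_pathP4 f (diagP4 d) (fun hij : i = j => huv (congrArg f hij))]
      simp [P]
    · obtain ⟨i, rfl⟩ := hu
      exact hfx i v hv
    · obtain ⟨i, rfl⟩ := hv
      rw [hPsymm, hfx i u hu, adjVal_comm]
    · rw [hPx v hv, hcx u hu]
      by_contra hne
      exact h ⟨u, hu⟩ ⟨v, hv⟩
        (obstructs_of_ne (fun h => huv (congrArg Subtype.val h)) fun h => hne h.symm)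
  calc minRank (ZMod 2) H ≤ M.rank := Nat.sInf_le ⟨M, hMG, rfl⟩
    _ ≤ ((Matrix.of c) * P).rank := Matrix.rank_mul_le_left _ _
    _ ≤ P.rank := Matrix.rank_mul_le_right _ _
    _ ≤ 3 := rank_matP4_le d

lemma IsGraphMatrix.apply_path {W : Type*} {H : SimpleGraph W} {A : Matrix W W (ZMod 2)}
    (hA : IsGraphMatrix (ZMod 2) H A) (f : pathP4 ↪g H) (i j : Fin 4) :
    A (f i) (f j) = matP4 (fun i => A (f i) (f i)) i j := by
  by_cases hij : i = j
  · subst hij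
    fin_cases i <;> rfl
  · rw [hA.apply_eq (f.injective.ne hij), adjVal_pathP4 f _ hij]

/-- Whatever its diagonal, a matrix of a graph containing an induced `P₄` has three independent
rows, those of the first three vertices of the path; in rank at most `3` they span all rows. -/
lemma row_eq_of_rank_le {W : Type*} [Fintype W] {H : SimpleGraph W} (f : pathP4 ↪g H)
    {A : Matrix W W (ZMod 2)} (hA : IsGraphMatrix (ZMod 2) H A) (hr : A.rank ≤ 3) (x : W) :
    ∃ c : Fin 4 → ZMod 2, c 3 = 0 ∧ ∀ y, A x y = ∑ i, c i * A (f i) y := by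
  let r : Fin 3 → W → ZMod 2 := fun i => A.row (f i.castSucc)
  have hli : LinearIndependent (ZMod 2) r := by
    rw [Fintype.linearIndependent_iff]
    intro g hg
    have hcol : ∀ j, ∑ i, g i * matP4 (fun i => A (f i) (f i)) i.castSucc j = 0 := by
      intro j
      simpa [r, Matrix.row, ← hA.apply_path f] using congrFun hg (f j)
    -- The columns `1, 2, 3` of these rows form a unitriangular matrix.
    have h1 := hcol 1
    have h2 := hcol 2
    have h3 := hcol 3
    simp [Fin.sum_univ_three, matP4] at h1 h2 h3
    simp [h3] at h2
    simp [h2, h3] at h1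
    intro i
    fin_cases i
    exacts [h1, h2, h3]
  have hle : Submodule.span (ZMod 2) (Set.range r) ≤ Submodule.span (ZMod 2) (Set.range A.row) :=
    Submodule.span_mono (by rintro _ ⟨i, rfl⟩; exact ⟨_, rfl⟩)
  have heq := Submodule.eq_of_le_of_finrank_le hle (by
    rw [← Matrix.rank_eq_finrank_span_row, finrank_span_eq_card hli]
    simpa using hr)
  have hx : A.row x ∈ Submodule.span (ZMod 2) (Set.range r) :=
    heq ▸ Submodule.subset_span ⟨x, rfl⟩
  obtain ⟨c, hc⟩ := (Submodule.mem_span_range_iff_exists_fun _).1 hx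
  refine ⟨Fin.snoc c 0, Fin.snoc_last (α := fun _ => ZMod 2) 0 c, fun y => ?_⟩
  rw [Fin.sum_univ_castSucc]
  simp only [Fin.snoc_castSucc, Fin.snoc_last, zero_mul, add_zero]
  simpa [r, Matrix.row] using (congrFun hc y).symm

lemma kerP4_dotProduct_comb (d : Fin 5) (c : Fin 4 → ZMod 2) :
    kerP4 d ⬝ᵥ (fun j => ∑ i, c i * matP4 (diagP4 d) i j) = 0 := by
  simp only [kerP4, matP4, diagP4, dotProduct, Fin.sum_univ_four]
  generalize c 0 = c0, c 1 = c1, c 2 = c2, c 3 = c3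
  revert c0 c1 c2 c3 d
  decide

/-- The value on `y` of the functional with coefficients `c` depends only on the pattern that `c`
produces on the path, and is given by the form. -/
lemma comb_eq_formP4 (d : Fin 5) (c y : Fin 4 → ZMod 2) (hy : kerP4 d ⬝ᵥ y = 0) :
    ∑ i, c i * y i = formP4 d (fun j => ∑ i, c i * matP4 (diagP4 d) i j) y := by
  simp only [kerP4, formP4, solP4, matP4, diagP4, dotProduct, Fin.sum_univ_four] at *
  generalize c 0 = c0, c 1 = c1, c 2 = c2, c 3 = c3, y 0 = y0, y 1 = y1, y 2 = y2, y 3 = y3 at *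
  revert c0 c1 c2 c3 y0 y1 y2 y3 d
  decide

/-- If the last row depends on the first three, the diagonal is one of the five singular ones. -/
lemma exists_diagP4 (e c : Fin 4 → ZMod 2) (hc3 : c 3 = 0)
    (hc : ∀ j, matP4 e 3 j = ∑ i, c i * matP4 e i j) : ∃ d, e = diagP4 d := by
  have h0 := hc 0
  have h1 := hc 1
  have h2 := hc 2
  have h3 := hc 3
  suffices h : ∃ d, e 0 = diagP4 d 0 ∧ e 1 = diagP4 d 1 ∧ e 2 = diagP4 d 2 ∧ e 3 = diagP4 d 3 by
    obtain ⟨d, g0, g1, g2, g3⟩ := h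
    refine ⟨d, funext fun i => ?_⟩
    fin_cases i <;> assumption
  clear hc
  simp [matP4, Fin.sum_univ_four, hc3] at h0 h1 h2 h3
  clear hc3
  generalize c 0 = c0, c 1 = c1, c 2 = c2, e 0 = e0, e 1 = e1, e 2 = e2, e 3 = e3 at *
  revert c0 c1 c2 e0 e1 e2 e3
  decide

/-- In rank at most `3` the principal submatrix on the path is one of the five singular ones, and
it determines all other entries. -/
lemma exists_unobstructed {W : Type*} [Fintype W] (H : SimpleGraph W) (f : pathP4 ↪g H)
    (h : minRank (ZMod 2) H ≤ 3) : ∃ d, ∀ x y : W, x ∉ Set.range f → y ∉ Set.range f →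
      kerP4 d ⬝ᵥ (fun i => adjVal H x (f i)) = 0 ∧
      (x ≠ y → adjVal H x y =
        formP4 d (fun i => adjVal H x (f i)) (fun i => adjVal H y (f i))) := by
  classical
  obtain ⟨A, hA, hr⟩ : ∃ A : Matrix W W (ZMod 2), IsGraphMatrix (ZMod 2) H A ∧
      A.rank = minRank (ZMod 2) H := by
    refine Nat.sInf_mem (s := {r : ℕ | ∃ A : Matrix W W (ZMod 2), IsGraphMatrix (ZMod 2) H A ∧
      A.rank = r}) ⟨_, fun x y => adjVal H x y, ⟨?_, fun x y _ => adjVal_ne_zero H x y⟩, rfl⟩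
    exact Matrix.IsSymm.ext fun x y => adjVal_comm H y x
  have hrow := row_eq_of_rank_le f hA (hr.trans_le h)
  have hP := hA.apply_path f
  obtain ⟨d, hd⟩ : ∃ d, (fun i => A (f i) (f i)) = diagP4 d := by
    obtain ⟨c, hc3, hc⟩ := hrow (f 3)
    refine exists_diagP4 _ c hc3 fun j => ?_
    simp only [← hP]
    exact hc (f j)
  rw [hd] at hP
  have hpat : ∀ x, x ∉ Set.range f → ∀ i, A x (f i) = adjVal H x (f i) :=
    fun x hx i => hA.apply_eq fun h => hx ⟨i, h.symm⟩
  have hcomb : ∀ x, x ∉ Set.range f → ∀ c : Fin 4 → ZMod 2,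
      (∀ y, A x y = ∑ i, c i * A (f i) y) →
      (fun i => adjVal H x (f i)) = fun j => ∑ i, c i * matP4 (diagP4 d) i j := by
    intro x hx c hc
    funext j
    rw [← hpat x hx, hc]
    simp only [hP]
  have hcol : ∀ x, x ∉ Set.range f → kerP4 d ⬝ᵥ (fun i => adjVal H x (f i)) = 0 := by
    intro x hx
    obtain ⟨c, -, hc⟩ := hrow x
    rw [hcomb x hx c hc, kerP4_dotProduct_comb]
  refine ⟨d, fun x y hx hy => ⟨hcol x hx, fun hxy => ?_⟩⟩
  obtain ⟨c, -, hc⟩ := hrow x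
  rw [hcomb x hx c hc, ← comb_eq_formP4 d c _ (hcol y hy), ← hA.apply_eq hxy, hc]
  refine Finset.sum_congr rfl fun i _ => ?_
  rw [← hpat y hy, hA.1.apply]

end Rank

/-! ### The bound on the number of vertices -/

/-- If `G ∈ F₄(F₂, P₄)`, then `G` has at most 8 vertices. -/
theorem card_le_eight_of_forbRel_P4 {V : Type*} [Fintype V] [DecidableEq V]
    (G : SimpleGraph V) (h : MemForbRel (ZMod 2) 4 pathP4 G) :
    Fintype.card V ≤ 8 := by
  classical
  obtain ⟨hG, f, hf⟩ := h
  by_contra hcard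
  have hall : ∀ d, ∃ x y : {x // x ∉ Set.range f}, Obstructs (fun x i => adjVal G x.1 (f i))
      (fun x y => adjVal G x.1 y.1) d x y := by
    intro d
    by_contra hd
    push Not at hd
    have := minRank_le_of_unobstructed G f d hd
    omega
  obtain ⟨p, q, r, s, hS⟩ := fourObstruct_of_forall hall
  obtain ⟨v, hv⟩ : ∃ v, v ∉ Finset.univ.image f ∪ {p.1, q.1, r.1, s.1} := by
    by_contra! hv
    have h1 : (Finset.univ : Finset V).card ≤ (Finset.univ.image f ∪ {p.1, q.1, r.1, s.1}).card :=
      Finset.card_le_card fun v _ => hv v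
    have h2 := Finset.card_union_le (Finset.univ.image f) {p.1, q.1, r.1, s.1}
    have h3 : (Finset.univ.image f).card ≤ 4 := Finset.card_image_le
    have h4 : ({p.1, q.1, r.1, s.1} : Finset V).card ≤ 4 := Finset.card_le_four
    rw [Finset.card_univ] at h1
    omega
  simp only [Finset.mem_union, Finset.mem_image, Finset.mem_univ, true_and, Finset.mem_insert,
    Finset.mem_singleton, not_or, not_exists] at hv
  obtain ⟨hvf, hvp, hvq, hvr, hvs⟩ := hv
  have hrank := hf v (by rintro ⟨i, hi⟩; exact hvf i hi)
  let g : pathP4 ↪g deleteVert G v :=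
    { toFun := fun i => ⟨f i, hvf i⟩
      inj' := fun i j hij => f.injective (congrArg Subtype.val hij)
      map_rel_iff' := f.map_adj_iff }
  obtain ⟨d, hd⟩ := exists_unobstructed (deleteVert G v) g (by omega)
  have hmem : ∀ x : {x // x ∉ Set.range f}, x ∈ ({p, q, r, s} : Set _) →
      ∃ hx : x.1 ≠ v, (⟨x.1, hx⟩ : {u // u ≠ v}) ∉ Set.range g := by
    intro x hx
    refine ⟨?_, ?_⟩
    · rcases hx with rfl | rfl | rfl | rfl <;> exact fun h => by simp_all
    · rintro ⟨i, hi⟩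
      exact x.2 ⟨i, congrArg Subtype.val hi⟩
  obtain ⟨x, hx, y, hy, hxy⟩ := hS d
  obtain ⟨hxv, hxg⟩ := hmem x hx
  obtain ⟨hyv, hyg⟩ := hmem y hy
  obtain ⟨hk, hform⟩ := hd _ _ hxg hyg
  obtain ⟨hk', -⟩ := hd _ _ hyg hxg
  rcases hxy with h1 | h1 | ⟨hne, h1⟩
  · exact h1 hk
  · exact h1 hk'
  · exact h1 (hform fun h => hne (Subtype.ext (congrArg (fun u => u.1) h)))
end

section
/- Every graph in F₄(F₂) has at most 8 vertices; that is, if G is a finite simple graph with mr(F₂,G) ≥ 4 and mr(F₂,G−v) ≤ 3 for every vertex v of G, then |V(G)| ≤ 8. -/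
/-!
Over `F₂`, a graph has minimum rank at most 3 if and only if its vertices can be represented by
vectors of `F₂³` so that distinct vertices are adjacent exactly when their standard dot product
is 1: a symmetric matrix `A` of rank at most 3 is `M * B * Mᵀ` with `B` symmetric of size 3, and
every such `B` is a Gram matrix `P * Pᵀ` (`exists_gram_of_rank_le`, `exists_gram`).

Suppose now that `G` is in `F₄(F₂)` and has at least 9 vertices. Then `G` is not representable, but
any 8 of its vertices are. Such a `G` is refuted by excluding more and more induced subgraphs, until
even the empty graph is excluded. To exclude `H`, fix one representation `r` of `H` and a set of
candidate vectors, and suppose that `H` occurs in `G`. If every vertex outside `H` has the same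
adjacencies to `H` as some candidate vector has to `r`, and if the vectors so chosen have the right
dot products with each other, then `G` is representable. Hence `G` contains `H` together with an
obstruction: one vertex matching no candidate, or two vertices whose adjacency disagrees with the
dot product of the vectors they match. For given `H` there are finitely many such graphs, and it
suffices that each of them either has at most 8 vertices and no representation, or contains a graph
excluded before (`excluded_of_stepOK`).

For graphs `H` on at most 6 vertices that span `F₂³` and whose representation is unique up to
coordinate permutations, the first alternative always applies. Starting from these, 28
exclusions suffice (`steps`); the finite check is carried out by kernel evaluation (`verify_steps`).
-/

open Matrix

/-- `G ∈ F_K(F)`: `G` is a minimal forbidden subgraph for the class of graphs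
with minimum rank at most `K - 1` over `F`, i.e. `mr(F, G) ≥ K` and
`mr(F, G - v) ≤ K - 1` for every vertex `v`. -/
def MemForbClass (F : Type*) [Field F] (K : ℕ) {V : Type*} [Fintype V] [DecidableEq V]
    (G : SimpleGraph V) : Prop :=
  K ≤ minRank F G ∧ ∀ v : V, minRank F (deleteVert G v) + 1 ≤ K

/-! ### The exclusion steps -/

/-- The standard dot product on `F₂³`. A vector is encoded by a natural number whose binary
digits `0, 1, 2` are its coordinates; the value is a Boolean. -/
def dotCode (x y : ℕ) : Bool :=
  ((x.testBit 0 && y.testBit 0) ^^ (x.testBit 1 && y.testBit 1)) ^^ (x.testBit 2 && y.testBit 2)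

/-- The strict upper triangle of the Boolean relation `a` on the entries of a list: the row of
an entry records its relation to the entries after it. For an adjacency relation this encodes the
induced labelled graph on the list, for `dotCode` the graph represented by a list of vectors. -/
def code {α : Type*} (a : α → α → Bool) : List α → List (List Bool)
  | [] => []
  | v :: l => l.map (a v) :: code a l

/-- Adjacency of the vertices in positions `i` and `j` of the graph with upper triangle `K`;
meaningless for `i = j` or for positions out of range. -/
def entry (K : List (List Bool)) (i j : ℕ) : Bool :=
  if i < j then (K.getD i []).getD (j - i - 1) false else (K.getD j []).getD (i - j - 1) false

/-- The set of all vectors `x` of `F₂³` with `dotCode x y = true`, as an 8-bit mask. The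
constant is the multiplication table of `dotCode`, one byte for each `y < 8`. -/
def dotMask (y : ℕ) : ℕ := Nat.land 255 (Nat.shiftRight 10825627592855169536 (Nat.mul 8 y))

/-- The set of all vectors of `F₂³` whose dot products with the list of vectors form the given
Boolean list, as an 8-bit mask. -/
def candMask : List ℕ → List Bool → ℕ
  | y :: s, b :: row =>
    Nat.land (bif b then dotMask y else Nat.xor 255 (dotMask y)) (candMask s row)
  | _, _ => 255

/-- The elements of the set with mask `m`. -/
def bitsOf (m : ℕ) : List ℕ :=
  bif Nat.beq m 0 then [] else [0, 1, 2, 3, 4, 5, 6, 7].filter fun x => m.testBit x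

/-- All ways to prepend a vector of `F₂³` to a list in `R` so that its dot products
with the rest of the list form `row`. -/
def extend (R : List (List ℕ)) (row : List Bool) : List (List ℕ) :=
  R.flatMap fun s => (bitsOf (candMask s row)).map fun x => x :: s

/-- All representations of the graph with upper triangle `K` by vectors of `F₂³`. -/
def reps : List (List Bool) → List (List ℕ)
  | [] => [[]]
  | row :: K => extend (reps K) row

/-- All Boolean lists of length `n`. -/
def allPatterns : ℕ → List (List Bool)
  | 0 => [[]]
  | n + 1 => (allPatterns n).flatMap fun p => [false :: p, true :: p]

/-- One step of the exclusion argument. The graph being excluded is the one represented by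
`vecs`; `cands` are the vectors offered to the vertices outside it; a hint `(j, e)` says that the
positions `e` of some obstruction may span a copy of the `j`-th graph excluded before. -/
structure Step where
  vecs : List ℕ
  cands : List ℕ
  hints : List (ℕ × List ℕ)

/-- Some hint exhibits an already excluded graph inside the graph `K`. -/
def subsumed (done : List (List (List Bool))) (hints : List (ℕ × List ℕ))
    (K : List (List Bool)) : Bool :=
  hints.any fun h => h.2.all (· < K.length) && done[h.1]? == some (code (entry K) h.2) &&
    decide h.2.Nodup

/-- The obstruction `K`, whose list of representations is `R`, cannot occur: it has at most 8
vertices and no representation, or it contains a graph excluded before. -/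
def closed (done : List (List (List Bool))) (hints : List (ℕ × List ℕ))
    (R : List (List ℕ)) (K : List (List Bool)) : Bool :=
  (R.isEmpty && decide (K.length ≤ 8)) || subsumed done hints K

/-- Every obstruction to extending the representation `s.vecs` to a whole graph by vectors from
`s.cands` is closed: a vertex whose adjacencies match no candidate vector, and
a pair of vertices matching `x` and `y` whose mutual adjacency is not the dot product of
`x` and `y`. -/
def stepOK (done : List (List (List Bool))) (s : Step) : Bool :=
  ((allPatterns s.vecs.length).all fun p =>
    (s.cands.any fun x => s.vecs.map (dotCode x) == p) ||
      closed done s.hints (extend (reps (code dotCode s.vecs)) p) (p :: code dotCode s.vecs)) &&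
  s.cands.all fun x => s.cands.all fun y => decide (y < x) ||
    closed done s.hints
      (extend (extend (reps (code dotCode s.vecs)) (s.vecs.map (dotCode x)))
        ((!dotCode y x) :: s.vecs.map (dotCode y)))
      (((!dotCode y x) :: s.vecs.map (dotCode y)) :: s.vecs.map (dotCode x) ::
        code dotCode s.vecs)

/-- All steps check, and the empty graph ends up excluded. -/
def verify : List (List (List Bool)) → List Step → Bool
  | done, [] => decide ([] ∈ done)
  | done, s :: rest => stepOK done s && verify (done ++ [code dotCode s.vecs]) rest

/-- The excluded graphs, each given by one of its representations. A graph `vecs` without hints has,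
up to the permutations of the three coordinates, only one representation, so all its obstructions
are already unrepresentable. Among the later ones are the path `P₄` (`[3, 5, 4, 2]`), the path `P₃`
(`[3, 1, 6]`), two disjoint edges (`[1, 2, 2, 1]`), a single edge (`[1, 1]`) and the empty graph. -/
def steps : List Step := [
  ⟨[3, 5, 1, 4, 2], [0, 1, 2, 3, 4, 5, 6, 7], []⟩,
  ⟨[3, 5, 6, 2, 1], [0, 1, 2, 3, 4, 5, 6, 7], []⟩,
  ⟨[1, 2, 4, 4, 2, 1], [0, 1, 2, 3, 4, 5, 6, 7], []⟩,
  ⟨[3, 4, 1, 1, 4, 2], [0, 1, 2, 3, 4, 5, 6, 7], []⟩,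
  ⟨[7, 3, 1, 1, 2, 4], [0, 1, 2, 3, 4, 5, 6, 7], []⟩,
  ⟨[7, 3, 3, 5, 5, 7], [0, 1, 2, 3, 4, 5, 6, 7], [(0, [0, 4, 3, 2, 1]), (0, [0, 4, 2, 3, 1]),
    (0, [0, 2, 5, 4, 1]), (0, [0, 2, 4, 5, 1]), (3, [4, 1, 0, 3, 6, 2]), (3, [4, 1, 0, 2, 6, 3]),
    (3, [2, 1, 0, 5, 6, 4]), (3, [2, 1, 0, 4, 6, 5])]⟩,
  ⟨[3, 4, 4, 5, 5, 2], [0, 1, 2, 3, 4, 5, 6, 7], []⟩,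
  ⟨[3, 3, 4, 5, 5, 2], [0, 1, 2, 3, 4, 5, 6, 7], []⟩,
  ⟨[1, 1, 3, 5, 5, 7], [0, 1, 2, 3, 4, 5, 6, 7], []⟩,
  ⟨[3, 7, 1, 1, 5, 2], [0, 1, 2, 3, 4, 5, 6, 7], []⟩,
  ⟨[7, 7, 1, 2, 2, 1], [0, 1, 2, 3, 4, 5, 6, 7], [(9, [6, 4, 1, 2, 3, 0]), (9, [5, 3, 1, 2, 4,
    0]), (9, [4, 3, 1, 2, 5, 0]), (9, [3, 4, 1, 2, 6, 0]), (8, [1, 2, 6, 0, 3, 4]), (8, [1, 2, 5,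
    0, 4, 3]), (8, [1, 2, 4, 0, 5, 3]), (8, [1, 2, 3, 0, 6, 4])]⟩,
  ⟨[3, 5, 5, 1, 1, 6], [0, 1, 2, 3, 4, 5, 6, 7], []⟩,
  ⟨[1, 6, 3, 3, 7], [0, 1, 2, 3, 4, 5, 6, 7], [(0, [0, 2, 4, 3, 5]), (0, [0, 2, 3, 4, 5]), (0,
    [1, 3, 0, 2, 5]), (1, [0, 1, 3, 2, 5]), (7, [0, 1, 2, 3, 4, 5]), (6, [1, 0, 2, 3, 4, 5]), (4,
    [1, 2, 0, 4, 3, 5]), (4, [1, 2, 0, 3, 4, 5])]⟩,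
  ⟨[1, 3, 2, 7, 5], [0, 1, 2, 3, 4, 5, 6, 7], [(0, [1, 5, 2, 0, 4]), (12, [4, 5, 0, 1, 3]), (1,
    [1, 0, 5, 2, 4]), (9, [1, 3, 0, 2, 5, 4])]⟩,
  ⟨[1, 3, 3, 5, 5], [0, 1, 2, 3, 4, 5, 6, 7], [(12, [5, 4, 2, 3, 0]), (12, [4, 5, 2, 3, 0]),
    (12, [3, 2, 4, 5, 0]), (12, [2, 3, 4, 5, 0]), (1, [4, 1, 3, 0, 2]), (1, [4, 1, 2, 0, 3]), (1,
    [2, 1, 5, 0, 4]), (1, [2, 1, 4, 0, 5]), (12, [0, 3, 5, 6, 1]), (12, [0, 5, 3, 4, 1]), (12, [0,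
    2, 3, 4, 1]), (1, [2, 3, 5, 1, 0]), (1, [5, 2, 3, 0, 1]), (1, [3, 2, 5, 0, 1]), (11, [1, 4, 5,
    0, 3, 2]), (11, [1, 4, 5, 0, 2, 3]), (11, [1, 2, 3, 0, 5, 4]), (11, [1, 2, 3, 0, 4, 5]), (5,
    [0, 3, 4, 5, 6, 1]), (11, [2, 5, 6, 0, 1, 3]), (11, [2, 3, 4, 0, 1, 5]), (11, [3, 5, 6, 0, 1,
    2])]⟩,
  ⟨[1, 1, 7, 7, 3, 3], [0, 1, 2, 3, 4, 5, 6, 7], [(14, [2, 0, 1, 5, 6]), (14, [1, 0, 2, 5, 6]),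
    (12, [1, 0, 3, 6, 5]), (12, [1, 0, 3, 5, 6]), (10, [1, 2, 0, 3, 4, 6]), (10, [1, 2, 0, 3, 4,
    5])]⟩,
  ⟨[1, 2, 2, 5, 5], [0, 1, 2, 3, 4, 5, 6, 7], [(12, [0, 2, 5, 6, 3]), (5, [3, 0, 2, 5, 6, 4]),
    (14, [2, 0, 1, 5, 6]), (0, [0, 1, 5, 4, 2]), (0, [0, 1, 4, 5, 2]), (3, [1, 2, 0, 5, 3, 4]),
    (3, [1, 2, 0, 4, 3, 5]), (8, [0, 1, 2, 5, 6, 3])]⟩,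
  ⟨[1, 7, 2, 5, 5], [0, 1, 2, 3, 4, 5, 6, 7], [(12, [0, 2, 5, 6, 4]), (12, [3, 5, 0, 2, 4]),
    (14, [2, 0, 1, 5, 6]), (13, [0, 2, 3, 4, 5])]⟩,
  ⟨[3, 1, 5, 5, 2], [0, 1, 2, 3, 4, 5, 6, 7], [(12, [0, 2, 3, 4, 5]), (12, [1, 0, 3, 4, 5]),
    (14, [1, 0, 2, 3, 4]), (8, [0, 1, 2, 3, 4, 5])]⟩,
  ⟨[7, 1, 2, 2, 1], [0, 1, 2, 3, 4, 5, 6, 7], [(16, [5, 3, 4, 0, 2]), (16, [4, 2, 5, 0, 3]),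
    (16, [3, 2, 5, 0, 4]), (16, [2, 3, 4, 0, 5]), (13, [1, 5, 0, 3, 2]), (13, [1, 4, 0, 2, 3]),
    (13, [1, 3, 0, 2, 4]), (13, [1, 2, 0, 3, 5]), (1, [1, 0, 5, 2, 3]), (1, [1, 0, 4, 3, 2]), (1,
    [1, 0, 3, 4, 2]), (1, [1, 0, 2, 5, 3]), (16, [2, 0, 1, 3, 4]), (0, [0, 2, 3, 4, 1]), (0, [0,
    2, 4, 3, 1]), (12, [0, 2, 3, 4, 1]), (16, [3, 4, 5, 0, 1]), (1, [2, 0, 1, 3, 4]), (13, [2, 3,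
    0, 4, 1]), (16, [4, 3, 6, 0, 1]), (13, [2, 4, 0, 3, 1]), (10, [0, 1, 3, 4, 5, 6])]⟩,
  ⟨[1, 1, 7, 7, 3], [0, 1, 2, 3, 4, 5, 6, 7], [(19, [2, 0, 4, 5, 6]), (15, [4, 5, 2, 3, 0, 1]),
    (15, [2, 3, 4, 5, 0, 6]), (13, [1, 4, 0, 5, 3]), (13, [1, 3, 0, 5, 4]), (1, [2, 1, 5, 0, 3]),
    (14, [2, 0, 1, 3, 5]), (1, [1, 2, 5, 0, 3]), (14, [1, 0, 2, 3, 5]), (18, [1, 4, 0, 3, 5]),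
    (18, [1, 3, 0, 4, 5]), (13, [1, 4, 2, 6, 0]), (12, [2, 0, 1, 4, 6])]⟩,
  ⟨[3, 1, 1, 6, 6], [0, 1, 2, 3, 4, 5, 6, 7], [(16, [1, 3, 4, 5, 6]), (20, [0, 2, 3, 4, 5]),
    (12, [1, 0, 2, 5, 4]), (12, [1, 0, 2, 4, 5]), (19, [1, 0, 2, 3, 5]), (19, [1, 0, 2, 3, 4]),
    (16, [0, 3, 4, 5, 6]), (20, [0, 1, 3, 4, 5])]⟩,
  ⟨[1, 1, 3, 7], [0, 1, 2, 3, 4, 5, 6, 7], [(20, [2, 3, 0, 4, 5]), (20, [2, 3, 0, 5, 4]), (21,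
    [4, 2, 3, 0, 1]), (18, [2, 1, 3, 4, 0]), (1, [2, 1, 4, 0, 3]), (1, [2, 1, 3, 0, 4]), (14, [2,
    0, 1, 3, 4]), (18, [1, 2, 3, 4, 0]), (1, [1, 2, 4, 0, 3]), (1, [1, 2, 3, 0, 4]), (14, [1, 0,
    2, 3, 4]), (16, [2, 0, 1, 4, 5]), (18, [0, 2, 4, 5, 1]), (12, [0, 2, 4, 5, 1]), (17, [2, 0, 1,
    4, 5]), (14, [2, 0, 1, 4, 5]), (14, [1, 0, 2, 4, 5]), (18, [2, 1, 4, 5, 0]), (21, [5, 2, 3, 0,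
    1]), (12, [2, 1, 4, 5, 0]), (13, [1, 5, 2, 4, 0]), (20, [2, 3, 0, 1, 4]), (12, [2, 0, 1, 5,
    4]), (17, [2, 4, 0, 1, 5]), (19, [4, 0, 2, 3, 1])]⟩,
  ⟨[3, 5, 4, 2], [0, 1, 2, 3, 4, 5, 6, 7], [(22, [0, 1, 2, 4]), (12, [3, 5, 1, 2, 4]), (22, [0,
    2, 1, 3]), (17, [2, 1, 4, 0, 3]), (13, [0, 2, 1, 4, 3]), (17, [1, 2, 3, 0, 4]), (13, [0, 1, 2,
    3, 4]), (12, [2, 4, 1, 3, 5]), (12, [4, 5, 0, 1, 3])]⟩,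
  ⟨[3, 1, 6], [0, 1, 2, 3, 4, 5, 6, 7], [(22, [0, 2, 3, 4]), (23, [2, 3, 0, 4]), (23, [2, 4, 0,
    3]), (23, [0, 2, 4, 1]), (22, [1, 2, 0, 3]), (23, [2, 4, 1, 0]), (23, [0, 2, 3, 1]), (23, [0,
    3, 2, 1]), (22, [2, 3, 0, 1]), (23, [0, 3, 1, 4]), (22, [2, 4, 0, 1]), (23, [0, 4, 1, 3]),
    (22, [0, 1, 3, 4]), (22, [1, 2, 3, 4]), (16, [2, 0, 1, 3, 4]), (21, [2, 1, 4, 0, 3]), (21, [2,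
    0, 1, 3, 4])]⟩,
  ⟨[1, 2, 2, 1], [0, 1, 2, 3], [(24, [0, 2, 4]), (24, [0, 1, 3]), (24, [4, 0, 1]), (24, [3, 0,
    2]), (24, [2, 0, 3]), (24, [1, 0, 4]), (24, [0, 1, 2]), (24, [2, 0, 1]), (2, [0, 2, 3, 4, 5,
    1])]⟩,
  ⟨[1, 1], [0, 1], [(24, [2, 0, 1]), (24, [1, 0, 2]), (24, [0, 1, 2]), (25, [0, 2, 3, 1])]⟩,
  ⟨[], [0], [(26, [0, 1])]⟩]

lemma verify_steps : verify [] steps = true := by decide +kernel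

/-! ### Soundness of the exclusion steps -/

section Combinatorics

lemma code_length {α : Type*} (a : α → α → Bool) (l : List α) : (code a l).length = l.length := by
  induction l with
  | nil => rfl
  | cons v l ih => simp [code, ih]

/-- The code of a list only depends on the relation between distinct entries. -/
lemma code_map {α β : Type*} (a : α → α → Bool) (b : β → β → Bool) (g : α → β) (l : List α)
    (hl : l.Nodup) (h : ∀ u ∈ l, ∀ v ∈ l, u ≠ v → a u v = b (g u) (g v)) :
    code a l = code b (l.map g) := by
  induction l with
  | nil => rfl
  | cons v l ih =>
    rw [List.nodup_cons] at hl
    simp only [code, List.map_cons, List.map_map, List.cons.injEq]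
    refine ⟨List.map_congr_left fun u hu => ?_, ih hl.2 fun u hu w hw => ?_⟩
    · exact h v (by simp) u (by simp [hu]) fun e => hl.1 (e ▸ hu)
    · exact h u (by simp [hu]) w (by simp [hw])

lemma entry_lt {α : Type*} (a : α → α → Bool) (d : α) (l : List α) (i j : ℕ) (hij : i < j)
    (hj : j < l.length) : entry (code a l) i j = a (l.getD i d) (l.getD j d) := by
  induction l generalizing i j with
  | nil => simp at hj
  | cons v l ih =>
    obtain ⟨j, rfl⟩ : ∃ k, j = k + 1 := ⟨j - 1, by omega⟩
    simp only [List.length_cons, Nat.add_lt_add_iff_right] at hj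
    cases i with
    | zero => simp [entry, code, hj]
    | succ i =>
      have := ih i j (by omega) hj
      simp only [entry, code, if_pos hij, if_pos (show i < j by omega)] at this ⊢
      simpa [Nat.add_sub_add_right] using this

lemma entry_code {α : Type*} (a : α → α → Bool) (ha : ∀ u v, a u v = a v u) (d : α) (l : List α)
    (i j : ℕ) (hij : i ≠ j) (hi : i < l.length) (hj : j < l.length) :
    entry (code a l) i j = a (l.getD i d) (l.getD j d) := by
  rcases lt_or_gt_of_ne hij with h | h
  · exact entry_lt a d l i j h hj
  · rw [ha, ← entry_lt a d l j i h hi]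
    simp [entry, h, not_lt.mpr h.le]

lemma dotCode_comm (x y : ℕ) : dotCode x y = dotCode y x := by
  simp [dotCode, Bool.and_comm]

lemma testBit_dotMask : ∀ y < 8, ∀ x < 8, (dotMask y).testBit x = dotCode x y ∧
    (Nat.xor 255 (dotMask y)).testBit x = !dotCode x y := by
  decide

lemma testBit_candMask (x : ℕ) (hx : x < 8) (s : List ℕ) (hs : ∀ y ∈ s, y < 8) :
    (candMask s (s.map (dotCode x))).testBit x = true := by
  induction s with
  | nil => revert x; decide
  | cons y s ih =>
    have h1 := ih fun z hz => hs z (by simp [hz])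
    have h2 := testBit_dotMask y (hs y (by simp)) x hx
    simp only [List.map_cons, candMask]
    change Nat.testBit (_ &&& _) x = true
    rw [Nat.testBit_and, h1, Bool.and_true]
    cases h : dotCode x y
    · simp only [cond_false, h2.2, h, Bool.not_false]
    · simp only [cond_true, h2.1, h]

lemma mem_bitsOf (x m : ℕ) (hx : x < 8) (h : m.testBit x = true) : x ∈ bitsOf m := by
  have hm : Nat.beq m 0 = false := by
    cases m with
    | zero => simp at h
    | succ m => rfl
  simp only [bitsOf, hm, cond_false, List.mem_filter, h, and_true]
  interval_cases x <;> simp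

/-- `reps` misses no representation. Only this half of its correctness matters, since it is
used to show that graphs have no representation. -/
lemma mem_reps (c : List ℕ) (hc : ∀ x ∈ c, x < 8) : c ∈ reps (code dotCode c) := by
  induction c with
  | nil => simp [code, reps]
  | cons x c ih =>
    have hc' : ∀ y ∈ c, y < 8 := fun y hy => hc y (by simp [hy])
    have hx : x < 8 := hc x (by simp)
    simp only [code, reps, extend, List.mem_flatMap, List.mem_map]
    exact ⟨c, ih hc', x, mem_bitsOf _ _ hx (testBit_candMask x hx c hc'), rfl⟩

lemma mem_allPatterns (p : List Bool) : p ∈ allPatterns p.length := by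
  induction p with
  | nil => simp [allPatterns]
  | cons b p ih =>
    simp only [List.length_cons, allPatterns, List.mem_flatMap]
    exact ⟨p, ih, by cases b <;> simp⟩

variable {V : Type*} (adj : V → V → Bool)

/-- The labelled graph `K` is not an induced subgraph of the graph `adj`. -/
def Excluded (K : List (List Bool)) : Prop :=
  ∀ l : List V, l.Nodup → code adj l ≠ K

/-- The map `g` represents `adj` on the vertices in `S` by vectors of `F₂³`. -/
def RepOn (g : V → ℕ) (S : Set V) : Prop :=
  ∀ u ∈ S, ∀ v ∈ S, u ≠ v → adj u v = dotCode (g u) (g v)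

variable {adj}

/-- If `adj` is representable on any 8 vertices and has no excluded induced subgraph, then no
induced subgraph of `adj` is closed. -/
lemma not_closed (hsymm : ∀ u v, adj u v = adj v u)
    (h8 : ∀ l : List V, l.Nodup → l.length ≤ 8 → ∃ g : V → ℕ, (∀ v, g v < 8) ∧
      RepOn adj g {v | v ∈ l})
    (done : List (List (List Bool))) (hdone : ∀ K ∈ done, Excluded adj K)
    (hints : List (ℕ × List ℕ)) (l : List V) (hl : l.Nodup) :
    closed done hints (reps (code adj l)) (code adj l) ≠ true := by
  intro h
  simp only [closed, Bool.or_eq_true, Bool.and_eq_true, List.isEmpty_iff, decide_eq_true_eq,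
    code_length] at h
  rcases h with ⟨h, hlen⟩ | h
  · obtain ⟨g, hg, hr⟩ := h8 l hl hlen
    have hcode := code_map adj dotCode g l hl hr
    have := mem_reps (l.map g) (by simp [hg])
    rw [← hcode, h] at this
    simp at this
  · simp only [subsumed, List.any_eq_true, Bool.and_eq_true, List.all_eq_true,
      decide_eq_true_eq, beq_iff_eq, code_length] at h
    obtain ⟨⟨j, e⟩, -, ⟨hlt, hj⟩, hnd⟩ := h
    simp only at hlt hj hnd
    have hne : code (entry (code adj l)) e ∈ done := List.mem_of_getElem? hj
    rcases l with - | ⟨d, tl⟩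
    · -- a graph without vertices only has the empty list of positions
      have : e = [] := List.eq_nil_iff_forall_not_mem.mpr fun i hi => by simpa using hlt i hi
      subst this
      exact hdone _ hne [] List.nodup_nil rfl
    · set l := d :: tl
      refine hdone _ hne (e.map fun i => l.getD i d) ?_ ?_
      · refine List.Nodup.map_on ?_ hnd
        intro i hi k hk hik
        have h1 := hlt i hi
        have h2 := hlt k hk
        rw [List.getD_eq_getElem _ _ h1, List.getD_eq_getElem _ _ h2] at hik
        exact (hl.getElem_inj_iff).mp hik
      · exact (code_map _ adj _ e hnd fun i hi k hk hik =>
          entry_code adj hsymm d l i k hik (hlt i hi) (hlt k hk)).symm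

/-- If all obstructions of a step are closed, then the given representation of the graph of that
step, placed on any copy of it in `adj`, extends to a representation of all of `adj`; so there is
no such copy. -/
lemma excluded_of_stepOK [DecidableEq V] (hsymm : ∀ u v, adj u v = adj v u)
    (hnot : ¬ ∃ g : V → ℕ, RepOn adj g Set.univ)
    (h8 : ∀ l : List V, l.Nodup → l.length ≤ 8 → ∃ g : V → ℕ, (∀ v, g v < 8) ∧
      RepOn adj g {v | v ∈ l})
    (done : List (List (List Bool))) (hdone : ∀ K ∈ done, Excluded adj K) (s : Step)
    (hs : stepOK done s = true) : Excluded adj (code dotCode s.vecs) := by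
  intro l hl hcode
  have hlen : l.length = s.vecs.length := by
    rw [← code_length adj, hcode, code_length]
  simp only [stepOK, Bool.and_eq_true, List.all_eq_true, Bool.or_eq_true, List.any_eq_true,
    beq_iff_eq, decide_eq_true_eq] at hs
  obtain ⟨hsingle, hpair⟩ := hs
  have hx : ∀ v, ∃ x, v ∉ l → x ∈ s.cands ∧ s.vecs.map (dotCode x) = l.map (adj v) := by
    intro v
    by_cases hv : v ∈ l
    · exact ⟨0, fun h => absurd hv h⟩
    rcases hsingle (l.map (adj v)) (by simpa [hlen] using mem_allPatterns (l.map (adj v)))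
      with ⟨x, hx, hp⟩ | hc
    · exact ⟨x, fun _ => ⟨hx, hp⟩⟩
    · refine absurd ?_ (not_closed hsymm h8 done hdone s.hints (v :: l)
        (List.nodup_cons.mpr ⟨hv, hl⟩))
      simpa only [code, reps, hcode] using hc
  choose x hx using hx
  -- The order of `x v` and `x w` is harmless by symmetry; `stepOK` only inspects pairs in this order.
  have hadj : ∀ v ∉ l, ∀ w ∉ l, v ≠ w → x v ≤ x w → adj w v = dotCode (x w) (x v) := by
    intro v hv w hw hvw hle
    by_contra hne
    have hne' : (!dotCode (x w) (x v)) = adj w v := by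
      revert hne
      cases dotCode (x w) (x v) <;> cases adj w v <;> simp
    obtain ⟨hv1, hv2⟩ := hx v hv
    obtain ⟨hw1, hw2⟩ := hx w hw
    rcases hpair _ hv1 _ hw1 with h | h
    · omega
    · rw [hv2, hw2, hne'] at h
      refine not_closed hsymm h8 done hdone s.hints (w :: v :: l) ?_ ?_
      · simp [hv, hw, hl, Ne.symm hvw]
      · simpa only [code, reps, hcode, List.map_cons] using h
  refine hnot ⟨fun v => if v ∈ l then s.vecs.getD (l.idxOf v) 0 else x v, ?_⟩
  have hmix : ∀ v ∉ l, ∀ u ∈ l, adj v u = dotCode (x v) (s.vecs.getD (l.idxOf u) 0) := by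
    intro v hv u hu
    have hi : l.idxOf u < l.length := List.idxOf_lt_length_of_mem hu
    have h := congrArg (fun p : List Bool => p[l.idxOf u]?) (hx v hv).2
    have hi' : l.idxOf u < s.vecs.length := hlen ▸ hi
    simp only [List.getElem?_map, List.getElem?_eq_getElem hi, List.getElem?_eq_getElem hi',
      Option.map_some, Option.some.injEq, List.getElem_idxOf] at h
    rw [List.getD_eq_getElem _ _ hi', h]
  intro u _ v _ huv
  by_cases hu : u ∈ l <;> by_cases hv : v ∈ l
  · simp only [hu, hv, if_true]
    have hi : l.idxOf u < l.length := List.idxOf_lt_length_of_mem hu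
    have hj : l.idxOf v < l.length := List.idxOf_lt_length_of_mem hv
    have hij : l.idxOf u ≠ l.idxOf v := fun h => huv ((List.idxOf_inj hu).mp h)
    have h1 := entry_code adj hsymm u l _ _ hij hi hj
    have h2 := entry_code dotCode dotCode_comm 0 s.vecs _ _ hij (hlen ▸ hi) (hlen ▸ hj)
    rw [← h2, ← hcode, h1, List.getD_eq_getElem _ _ hi, List.getD_eq_getElem _ _ hj,
      List.getElem_idxOf, List.getElem_idxOf]
  · simp only [hu, hv, if_true, if_false]
    rw [hsymm, dotCode_comm, hmix v hv u hu]
  · simp only [hu, hv, if_true, if_false]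
    exact hmix u hu v hv
  · simp only [hu, hv, if_false]
    rcases le_total (x v) (x u) with h | h
    · exact hadj v hv u hu huv.symm h
    · rw [hsymm, dotCode_comm]
      exact hadj u hu v hv huv h

/-- A graph that is representable on any 8 vertices but not as a whole would refute the
verification: its induced subgraph on no vertices is empty. -/
lemma not_verify [DecidableEq V] (hsymm : ∀ u v, adj u v = adj v u)
    (hnot : ¬ ∃ g : V → ℕ, RepOn adj g Set.univ)
    (h8 : ∀ l : List V, l.Nodup → l.length ≤ 8 → ∃ g : V → ℕ, (∀ v, g v < 8) ∧
      RepOn adj g {v | v ∈ l})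
    (L : List Step) (done : List (List (List Bool))) (hdone : ∀ K ∈ done, Excluded adj K) :
    verify done L ≠ true := by
  induction L generalizing done with
  | nil =>
    intro h
    simp only [verify, decide_eq_true_eq] at h
    exact hdone _ h [] List.nodup_nil rfl
  | cons s L ih =>
    intro h
    simp only [verify, Bool.and_eq_true] at h
    refine ih _ ?_ h.2
    intro K hK
    rcases List.mem_append.mp hK with hK | hK
    · exact hdone K hK
    · rw [List.mem_singleton.mp hK]
      exact excluded_of_stepOK hsymm hnot h8 done hdone s h.1

end Combinatorics

/-! ### Minimum rank at most 3 and representations by vectors -/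

section LinearAlgebra

/-- The vector of `F₂³` encoded by `x`. -/
def vecOf (x : ℕ) (i : Fin 3) : ZMod 2 := if x.testBit i then 1 else 0

/-- The code of a vector of `F₂³`. -/
def codeOf (u : Fin 3 → ZMod 2) : ℕ := (u 0).val + 2 * (u 1).val + 4 * (u 2).val

lemma codeOf_lt (u : Fin 3 → ZMod 2) : codeOf u < 8 := by
  have h := fun i => ZMod.val_lt (u i)
  have h0 := h 0
  have h1 := h 1
  have h2 := h 2
  unfold codeOf
  omega

lemma dotCode_iff (x y : ℕ) : dotCode x y = true ↔ vecOf x ⬝ᵥ vecOf y ≠ 0 := by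
  simp only [dotCode, dotProduct, Fin.sum_univ_three, vecOf, Fin.val_zero, Fin.val_one, Fin.val_two]
  have key : ∀ a a₁ b b₁ c c₁ : Bool, (((a && a₁) ^^ (b && b₁)) ^^ (c && c₁)) = true ↔
      (if a then 1 else 0 : ZMod 2) * (if a₁ then 1 else 0) +
        (if b then 1 else 0) * (if b₁ then 1 else 0) +
        (if c then 1 else 0) * (if c₁ then 1 else 0) ≠ 0 := by decide
  exact key _ _ _ _ _ _

lemma vecOf_codeOf (u : Fin 3 → ZMod 2) : vecOf (codeOf u) = u := by
  have key : ∀ a b c : ZMod 2, ∀ i : Fin 3, vecOf (a.val + 2 * b.val + 4 * c.val) i =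
      ![a, b, c] i := by decide
  funext i
  rw [codeOf, key]
  fin_cases i <;> rfl

/-- Every symmetric `3 × 3` matrix over `F₂` is a Gram matrix for the standard dot product
on `F₂³`. -/
lemma exists_gram (B : Matrix (Fin 3) (Fin 3) (ZMod 2)) (hB : B.IsSymm) :
    ∃ P : Matrix (Fin 3) (Fin 3) (ZMod 2), B = P * Pᵀ := by
  have key : ∀ a b c d e f : ZMod 2, ∃ x < 8, ∃ y < 8, ∃ z < 8,
      vecOf x ⬝ᵥ vecOf x = a ∧ vecOf x ⬝ᵥ vecOf y = b ∧ vecOf x ⬝ᵥ vecOf z = c ∧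
      vecOf y ⬝ᵥ vecOf y = d ∧ vecOf y ⬝ᵥ vecOf z = e ∧ vecOf z ⬝ᵥ vecOf z = f := by
    decide +kernel
  obtain ⟨x, -, y, -, z, -, h⟩ := key (B 0 0) (B 0 1) (B 0 2) (B 1 1) (B 1 2) (B 2 2)
  obtain ⟨h00, h01, h02, h11, h12, h22⟩ := h
  refine ⟨Matrix.of ![vecOf x, vecOf y, vecOf z], ?_⟩
  have hmul : ∀ i j, (Matrix.of ![vecOf x, vecOf y, vecOf z] *
      (Matrix.of ![vecOf x, vecOf y, vecOf z])ᵀ) i j =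
      (![vecOf x, vecOf y, vecOf z] i) ⬝ᵥ (![vecOf x, vecOf y, vecOf z] j) := fun i j => rfl
  ext i j
  rw [hmul]
  have hs := fun i j => hB.apply i j
  fin_cases i <;> fin_cases j <;> simp only [Fin.zero_eta, Fin.mk_one, Fin.reduceFinMk,
    Matrix.cons_val_zero, Matrix.cons_val_one, Matrix.cons_val] <;>
    first
    | exact h00.symm | exact h01.symm | exact h02.symm | exact h11.symm | exact h12.symm
    | exact h22.symm
    | (rw [dotProduct_comm, hs]; first | exact h01.symm | exact h02.symm | exact h12.symm)

/-- A symmetric matrix of rank at most 3 over `F₂` is a Gram matrix of vectors of `F₂³`. -/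
lemma exists_gram_of_rank_le {W : Type*} [Fintype W] [DecidableEq W] (A : Matrix W W (ZMod 2))
    (hA : A.IsSymm) (hr : A.rank ≤ 3) :
    ∃ Q : Matrix W (Fin 3) (ZMod 2), A = Q * Qᵀ := by
  -- `M * L` is a projection onto the column space of `A`, factored through `F₂³`.
  obtain ⟨M, L, hML⟩ : ∃ (M : Matrix W (Fin 3) (ZMod 2)) (L : Matrix (Fin 3) W (ZMod 2)),
      M * L * A = A := by
    set R := LinearMap.range A.mulVecLin with hR
    have hfin : Module.finrank (ZMod 2) R ≤ Module.finrank (ZMod 2) (Fin 3 → ZMod 2) := by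
      rw [Module.finrank_fin_fun]
      exact hr
    obtain ⟨i, hi⟩ := finrank_le_iff_exists_linearMap.mp hfin
    obtain ⟨g, hg⟩ := i.exists_leftInverse_of_injective (LinearMap.ker_eq_bot.mpr hi)
    obtain ⟨i', hi'⟩ := LinearMap.exists_extend i
    refine ⟨LinearMap.toMatrix' (R.subtype ∘ₗ g), LinearMap.toMatrix' i', ?_⟩
    apply Matrix.toLin'.injective
    refine LinearMap.ext fun v => ?_
    have hv : A *ᵥ v ∈ R := ⟨v, rfl⟩
    rw [Matrix.toLin'_mul, Matrix.toLin'_mul]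
    simp only [LinearMap.comp_apply, Matrix.toLin'_toMatrix', Matrix.toLin'_apply]
    have h1 : i' (A *ᵥ v) = i ⟨A *ᵥ v, hv⟩ := LinearMap.congr_fun hi' ⟨A *ᵥ v, hv⟩
    have h2 : g (i ⟨A *ᵥ v, hv⟩) = ⟨A *ᵥ v, hv⟩ := LinearMap.congr_fun hg _
    rw [h1, h2]
    rfl
  have hA' : A * Lᵀ * Mᵀ = A := by
    have := congrArg Matrix.transpose hML
    rwa [Matrix.transpose_mul, Matrix.transpose_mul, hA.eq, ← Matrix.mul_assoc] at this
  obtain ⟨P, hP⟩ := exists_gram (L * A * Lᵀ) (by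
    rw [Matrix.IsSymm, Matrix.transpose_mul, Matrix.transpose_mul, hA.eq,
      Matrix.transpose_transpose, Matrix.mul_assoc])
  refine ⟨M * P, ?_⟩
  calc A = M * L * (A * Lᵀ * Mᵀ) := by rw [hA', hML]
    _ = M * (L * A * Lᵀ) * Mᵀ := by simp only [Matrix.mul_assoc]
    _ = M * P * (M * P)ᵀ := by rw [hP, Matrix.transpose_mul]; simp only [Matrix.mul_assoc]

lemma exists_vectors_of_minRank_le {W : Type*} [Fintype W] [DecidableEq W] (H : SimpleGraph W)
    (h : minRank (ZMod 2) H ≤ 3) :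
    ∃ q : W → Fin 3 → ZMod 2, ∀ u v, u ≠ v → (q u ⬝ᵥ q v ≠ 0 ↔ H.Adj u v) := by
  classical
  have hne : {r : ℕ | ∃ A : Matrix W W (ZMod 2), IsGraphMatrix (ZMod 2) H A ∧
      A.rank = r}.Nonempty := by
    refine ⟨_, H.adjMatrix (ZMod 2), ⟨H.isSymm_adjMatrix, fun i j _ => ?_⟩, rfl⟩
    by_cases hij : H.Adj i j <;> simp [hij]
  obtain ⟨A, ⟨hs, hadj⟩, hr⟩ := Nat.sInf_mem hne
  obtain ⟨Q, rfl⟩ := exists_gram_of_rank_le A hs (hr.trans_le h)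
  exact ⟨fun u => Q u, fun u v huv => hadj u v huv⟩

lemma minRank_le_of_vectors {W : Type*} [Fintype W] (H : SimpleGraph W)
    (q : W → Fin 3 → ZMod 2) (h : ∀ u v, u ≠ v → (q u ⬝ᵥ q v ≠ 0 ↔ H.Adj u v)) :
    minRank (ZMod 2) H ≤ 3 := by
  set Q : Matrix W (Fin 3) (ZMod 2) := Matrix.of q
  have hg : IsGraphMatrix (ZMod 2) H (Q * Qᵀ) :=
    ⟨by rw [Matrix.IsSymm, Matrix.transpose_mul, Matrix.transpose_transpose], h⟩
  calc minRank (ZMod 2) H ≤ (Q * Qᵀ).rank := Nat.sInf_le ⟨_, hg, rfl⟩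
    _ ≤ Q.rank := Matrix.rank_mul_le_left _ _
    _ ≤ 3 := by simpa using Matrix.rank_le_card_width Q

end LinearAlgebra

/-- Every graph in `F₄(F₂)` has at most 8 vertices: if `G` is a finite simple graph with
`mr(F₂, G) ≥ 4` and `mr(F₂, G - v) ≤ 3` for every vertex `v` of `G`, then `G` has at
most 8 vertices. -/
theorem card_le_eight_of_forbClass_four {V : Type*} [Fintype V] [DecidableEq V]
    (G : SimpleGraph V) (hG : MemForbClass (ZMod 2) 4 G) :
    Fintype.card V ≤ 8 := by
  classical
  obtain ⟨hge, hdel⟩ := hG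
  by_contra hcard
  set adj : V → V → Bool := fun u v => decide (G.Adj u v) with hadj
  refine not_verify (adj := adj) (fun u v => by simp [hadj, G.adj_comm]) ?_ ?_ steps []
    (by simp) verify_steps
  · rintro ⟨g, hg⟩
    have : minRank (ZMod 2) G ≤ 3 := by
      refine minRank_le_of_vectors G (fun v => vecOf (g v)) fun u v huv => ?_
      rw [← dotCode_iff, ← hg u trivial v trivial huv, hadj, decide_eq_true_eq]
    omega
  · intro l hl hlen
    obtain ⟨w, hw⟩ : ∃ w, w ∉ l := by
      by_contra! hall
      have : Fintype.card V ≤ l.toFinset.card :=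
        Finset.card_le_card (fun v _ => List.mem_toFinset.mpr (hall v))
      have := l.toFinset_card_le
      omega
    obtain ⟨q, hq⟩ := exists_vectors_of_minRank_le (deleteVert G w) (by have := hdel w; omega)
    refine ⟨fun v => if h : v ≠ w then codeOf (q ⟨v, h⟩) else 0, fun v => ?_, ?_⟩
    · by_cases h : v ≠ w
      · simpa [h] using codeOf_lt _
      · simp [h]
    · intro u hu v hv huv
      have hu' : u ≠ w := fun h => hw (h ▸ hu)
      have hv' : v ≠ w := fun h => hw (h ▸ hv)
      have h := hq ⟨u, hu'⟩ ⟨v, hv'⟩ (fun h => huv (congrArg Subtype.val h))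
      dsimp only
      rw [dif_pos hu', dif_pos hv', Bool.eq_iff_iff, dotCode_iff, vecOf_codeOf, vecOf_codeOf, h,
        hadj, decide_eq_true_eq]
      rfl
end
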